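/- arXiv:1112.3936 — 8 statements merged into one kernel-verified Lean document; each statement's English description precedes it below -/
import Mathlib

section
/- Let α : ℝ → ℝ³ be a C¹ curve with α(s) ∈ 𝕊²₁ for all s, and set ψ = π ∘ α. Then for every s, ⟨ψ'(s), ψ'(s)⟩ = ⟨α'(s), α'(s)⟩/(1 + ⟨α(s),a⟩²) + ⟨α'(s),a⟩²/(1 + ⟨α(s),a⟩²)², and in particular ⟨ψ'(s), ψ'(s)⟩ ≥ ⟨α'(s), α'(s)⟩/(1 + ⟨α(s),a⟩²). Consequently, if α is spacelike (⟨α'(s),α'(s)⟩ > 0 for all s), then ψ'(s) ≠ 0 for all s, i.e. ψ is a regular curve on the waist C. -/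
/-!
For a C¹ curve α on the pseudosphere with projection ψ = π ∘ α:
⟨ψ',ψ'⟩ = ⟨α',α'⟩/(1+⟨α,a⟩²) + ⟨α',a⟩²/(1+⟨α,a⟩²)² ≥ ⟨α',α'⟩/(1+⟨α,a⟩²),
so if α is spacelike then ψ is regular.
-/

/-- The Lorentzian inner product on ℝ³. -/
def lorentz (x y : Fin 3 → ℝ) : ℝ := x 0 * y 0 + x 1 * y 1 - x 2 * y 2

/-- The timelike vector a = (0,0,1). -/
def aVec : Fin 3 → ℝ := ![0, 0, 1]

/-- The unit pseudosphere (de Sitter surface) 𝕊²₁. -/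
def pseudoSphere : Set (Fin 3 → ℝ) := {x | lorentz x x = 1}

/-- Geodesic projection π(p) = (p + ⟨p,a⟩a)/√(1 + ⟨p,a⟩²). -/
noncomputable def piProj (p : Fin 3 → ℝ) : Fin 3 → ℝ :=
  (1 / Real.sqrt (1 + (lorentz p aVec) ^ 2)) • (p + (lorentz p aVec) • aVec)

theorem stmt_4 (α : ℝ → (Fin 3 → ℝ)) (hα : ContDiff ℝ 1 α)
    (hS : ∀ s : ℝ, α s ∈ pseudoSphere)
    (ψ : ℝ → (Fin 3 → ℝ)) (hψ : ψ = fun s => piProj (α s)) :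
    (∀ s : ℝ, lorentz (deriv ψ s) (deriv ψ s) =
        lorentz (deriv α s) (deriv α s) / (1 + (lorentz (α s) aVec) ^ 2)
        + (lorentz (deriv α s) aVec) ^ 2 / (1 + (lorentz (α s) aVec) ^ 2) ^ 2) ∧
    (∀ s : ℝ, lorentz (deriv α s) (deriv α s) / (1 + (lorentz (α s) aVec) ^ 2) ≤
        lorentz (deriv ψ s) (deriv ψ s)) ∧
    ((∀ s : ℝ, 0 < lorentz (deriv α s) (deriv α s)) → ∀ s : ℝ, deriv ψ s ≠ 0) := by
  have key : ∀ s : ℝ, lorentz (deriv ψ s) (deriv ψ s) =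
        lorentz (deriv α s) (deriv α s) / (1 + (lorentz (α s) aVec) ^ 2)
        + (lorentz (deriv α s) aVec) ^ 2 / (1 + (lorentz (α s) aVec) ^ 2) ^ 2 := by
    intro s
    have hd : ∀ t, HasDerivAt α (deriv α t) t := fun t =>
      ((hα.differentiable (by norm_num)) t).hasDerivAt
    have hc : ∀ i, HasDerivAt (fun t => α t i) (deriv α s i) s := fun i =>
      (hasDerivAt_pi.1 (hd s)) i
    have hS' : ∀ t, α t 0 * α t 0 + α t 1 * α t 1 - α t 2 * α t 2 = 1 := fun t => hS t
    -- differentiate the constraint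
    have hcon : deriv α s 0 * α s 0 + deriv α s 1 * α s 1 - deriv α s 2 * α s 2 = 0 := by
      have h1 := (((hc 0).mul (hc 0)).add ((hc 1).mul (hc 1))).sub ((hc 2).mul (hc 2))
      have h2 : HasDerivAt (fun t => α t 0 * α t 0 + α t 1 * α t 1 - α t 2 * α t 2) 0 s := by
        simp only [hS']
        exact hasDerivAt_const s 1
      have h3 := h1.unique h2
      linarith
    have hw : 0 < 1 + (α s 2) ^ 2 := by positivity
    have hr : 0 < Real.sqrt (1 + (α s 2) ^ 2) := Real.sqrt_pos.2 hw
    have hr2 : Real.sqrt (1 + (α s 2) ^ 2) ^ 2 = 1 + (α s 2) ^ 2 := Real.sq_sqrt hw.le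
    have hq : HasDerivAt (fun t => Real.sqrt (1 + (α t 2) ^ 2))
        (α s 2 * deriv α s 2 / Real.sqrt (1 + (α s 2) ^ 2)) s := by
      have h := (((hc 2).pow 2).const_add 1).sqrt hw.ne'
      refine h.congr_deriv ?_
      change ((2 : ℕ) : ℝ) * α s 2 ^ (2 - 1) * deriv α s 2 /
        (2 * Real.sqrt (1 + (α s 2) ^ 2)) = _
      norm_num
      field_simp
    have hψ' : ψ = fun t => ![α t 0 / Real.sqrt (1 + (α t 2) ^ 2),
        α t 1 / Real.sqrt (1 + (α t 2) ^ 2), 0] := by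
      subst hψ
      funext t i
      have hl : lorentz (α t) aVec = - α t 2 := by simp [lorentz, aVec]
      simp only [piProj, hl, neg_sq, Pi.smul_apply, Pi.add_apply, smul_eq_mul]
      fin_cases i
      · change _ * (α t 0 + - α t 2 * 0) = α t 0 / _
        ring
      · change _ * (α t 1 + - α t 2 * 0) = α t 1 / _
        ring
      · change _ * (α t 2 + - α t 2 * 1) = 0
        ring
    have e0 := (hc 0).div hq hr.ne'
    have e1 := (hc 1).div hq hr.ne'
    have hD : HasDerivAt ψ
        ![(deriv α s 0 * √(1 + α s 2 ^ 2) - α s 0 * (α s 2 * deriv α s 2 / √(1 + α s 2 ^ 2)))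
            / √(1 + α s 2 ^ 2) ^ 2,
          (deriv α s 1 * √(1 + α s 2 ^ 2) - α s 1 * (α s 2 * deriv α s 2 / √(1 + α s 2 ^ 2)))
            / √(1 + α s 2 ^ 2) ^ 2, 0] s := by
      rw [hψ', hasDerivAt_pi]
      intro i
      fin_cases i
      · exact e0
      · exact e1
      · exact hasDerivAt_const s (0 : ℝ)
    rw [hD.deriv]
    have hs := hS' s
    simp only [lorentz, aVec, Matrix.cons_val]
    generalize Real.sqrt (1 + (α s 2) ^ 2) = r at *
    generalize deriv α s 0 = x' at *
    generalize deriv α s 1 = y' at *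
    generalize deriv α s 2 = z' at *
    generalize α s 0 = x at *
    generalize α s 1 = y at *
    generalize α s 2 = z at *
    have hz : (1 : ℝ) + (x * 0 + y * 0 - z * 1) ^ 2 = r ^ 2 := by rw [hr2]; ring
    rw [hz]
    have hxx : x * x + y * y = r ^ 2 := by rw [hr2]; linarith
    have hxy : x' * x + y' * y = z' * z := by linarith
    have hzz : z ^ 2 = r ^ 2 - 1 := by linarith
    have hr0 : r ≠ 0 := hr.ne'
    trans ((x' ^ 2 + y' ^ 2) * r ^ 4 - 2 * (x' * x + y' * y) * (z' * z) * r ^ 2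
      + (x * x + y * y) * z' ^ 2 * z ^ 2) / r ^ 6
    · field_simp
      ring
    · rw [hxx, hxy]
      trans ((x' ^ 2 + y' ^ 2) * r ^ 4 - z' ^ 2 * z ^ 2 * r ^ 2) / r ^ 6
      · ring
      · rw [hzz]
        field_simp
        ring
  have hle : ∀ s : ℝ, lorentz (deriv α s) (deriv α s) / (1 + (lorentz (α s) aVec) ^ 2) ≤
        lorentz (deriv ψ s) (deriv ψ s) := by
    intro s
    rw [key s]
    have : 0 ≤ (lorentz (deriv α s) aVec) ^ 2 / (1 + (lorentz (α s) aVec) ^ 2) ^ 2 := by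
      positivity
    linarith
  refine ⟨key, hle, ?_⟩
  intro h s h0
  have h1 := hle s
  have h2 : 0 < lorentz (deriv α s) (deriv α s) / (1 + (lorentz (α s) aVec) ^ 2) :=
    div_pos (h s) (by positivity)
  rw [h0] at h1
  simp [lorentz] at h1 h2
  linarith
end

section
/- Let α : 𝕊¹ → 𝕊²₁ be a closed spacelike C¹ curve (i.e. α is C¹ with ⟨α'(s), α'(s)⟩ > 0 for all s). Then π ∘ α : 𝕊¹ → C is a covering map of the waist C. -/
/-- The waist C of the pseudosphere: the unit circle in the plane x₃ = 0. -/
def waist : Set (Fin 3 → ℝ) := {x | lorentz x x = 1 ∧ x 2 = 0}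

open Topology

/-- The circle is homeomorphic to the waist. -/
noncomputable def circleWaist : Circle ≃ₜ waist where
  toFun z := ⟨![(z : ℂ).re, (z : ℂ).im, 0], by
    have h := Circle.normSq_coe z
    rw [Complex.normSq_apply] at h
    simp [waist, lorentz, h]⟩
  invFun w := ⟨⟨w.1 0, w.1 1⟩, by
    have h := w.2.1
    have h2 := w.2.2
    simp only [lorentz, h2] at h
    change _ ∈ Metric.sphere (0 : ℂ) 1
    rw [mem_sphere_zero_iff_norm, ← sq_eq_sq₀ (norm_nonneg _) zero_le_one, ← Complex.normSq_eq_norm_sq,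
      Complex.normSq_apply]
    linarith⟩
  left_inv z := by ext; simp
  right_inv w := by
    apply Subtype.ext
    funext i
    have h2 := w.2.2
    fin_cases i <;> simp [h2]
  continuous_toFun := by
    refine Continuous.subtype_mk (continuous_pi fun i => ?_) _
    fin_cases i
    · exact Complex.continuous_re.comp continuous_subtype_val
    · exact Complex.continuous_im.comp continuous_subtype_val
    · exact continuous_const
  continuous_invFun := by
    refine Continuous.subtype_mk ?_ _
    have h0 : Continuous fun w : waist => w.1 0 := (continuous_apply 0).comp continuous_subtype_val
    have h1 : Continuous fun w : waist => w.1 1 := (continuous_apply 1).comp continuous_subtype_val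
    have : (fun w : waist => (⟨w.1 0, w.1 1⟩ : ℂ)) =
        fun w : waist => ((w.1 0 : ℝ) : ℂ) + ((w.1 1 : ℝ) : ℂ) * Complex.I := by
      funext w; apply Complex.ext <;> simp
    rw [this]
    exact (Complex.continuous_ofReal.comp h0).add
      ((Complex.continuous_ofReal.comp h1).mul continuous_const)

/-- A real function with nonzero strict derivative everywhere is a local homeomorphism. -/
theorem isLocalHomeomorph_of_strictDeriv {f f' : ℝ → ℝ}
    (hf : ∀ x, HasStrictDerivAt f (f' x) x) (h0 : ∀ x, f' x ≠ 0) : IsLocalHomeomorph f := by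
  intro x
  have h := (hf x).hasStrictFDerivAt_equiv (h0 x)
  exact ⟨h.toOpenPartialHomeomorph f, h.mem_toOpenPartialHomeomorph_source, rfl⟩

/-- Angle function for the projection of a spacelike curve. -/
theorem exists_angle (x y t x' y' t' : ℝ → ℝ)
    (hx : ∀ s, HasDerivAt x (x' s) s) (hy : ∀ s, HasDerivAt y (y' s) s)
    (ht : ∀ s, HasDerivAt t (t' s) s)
    (cx : Continuous x') (cy : Continuous y')
    (hS : ∀ s, x s * x s + y s * y s - t s * t s = 1)
    (hsp : ∀ s, 0 < x' s * x' s + y' s * y' s - t' s * t' s) :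
    ∃ θ : ℝ → ℝ, IsLocalHomeomorph θ ∧ ∀ s,
      x s / √(1 + t s ^ 2) = Real.cos (θ s) ∧ y s / √(1 + t s ^ 2) = Real.sin (θ s) := by
  have hx0 : Continuous x := continuous_iff_continuousAt.2 fun s => (hx s).continuousAt
  have hy0 : Continuous y := continuous_iff_continuousAt.2 fun s => (hy s).continuousAt
  have ht0 : Continuous t := continuous_iff_continuousAt.2 fun s => (ht s).continuousAt
  have hW : ∀ s, 0 < 1 + t s ^ 2 := fun s => by positivity
  -- differentiated constraint
  have hD : ∀ s, x s * x' s + y s * y' s = t s * t' s := by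
    intro s
    have h1 := (((hx s).mul (hx s)).add ((hy s).mul (hy s))).sub ((ht s).mul (ht s))
    have h2 : HasDerivAt (x * x + y * y - t * t) 0 s := by
      have : x * x + y * y - t * t = fun _ => (1 : ℝ) := by
        funext s; simpa using hS s
      rw [this]; exact hasDerivAt_const _ _
    have := h1.unique h2
    linarith
  let κ : ℝ → ℝ := fun s => (x s * y' s - y s * x' s) / (1 + t s ^ 2)
  have hκc : Continuous κ := by
    refine Continuous.div (by fun_prop) (by fun_prop) fun s => (hW s).ne'
  have hκ0 : ∀ s, κ s ≠ 0 := by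
    intro s
    refine div_ne_zero ?_ (hW s).ne'
    intro h
    have e : (1 + t s ^ 2) * (x' s * x' s + y' s * y' s)
        = (x s * x' s + y s * y' s) ^ 2 + (x s * y' s - y s * x' s) ^ 2 := by
      have : 1 + t s ^ 2 = x s * x s + y s * y s := by linarith [hS s]
      rw [this]; ring
    rw [h, hD] at e
    have := mul_pos (hW s) (hsp s)
    nlinarith [sq_nonneg (t' s)]
  let r : ℝ → ℝ := fun s => (√(1 + t s ^ 2))⁻¹
  have hr : ∀ s, HasDerivAt r (-(r s) * (t s * t' s / (1 + t s ^ 2))) s := by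
    intro s
    have h1 : HasDerivAt (fun s => 1 + t s ^ 2) (2 * t s * t' s) s := by
      simpa using ((ht s).pow 2).const_add 1
    have hq := Real.sqrt_pos.2 (hW s)
    have h2 := (h1.sqrt (hW s).ne').fun_inv hq.ne'
    refine h2.congr_deriv ?_
    simp only [r]
    have h3 := Real.sq_sqrt (hW s).le
    rw [h3]
    field_simp
  let u : ℝ → ℝ := fun s => x s * r s
  let v : ℝ → ℝ := fun s => y s * r s
  have hu : ∀ s, HasDerivAt u (-(κ s) * v s) s := by
    intro s
    refine ((hx s).mul (hr s)).congr_deriv ?_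
    have := (hW s).ne'
    simp only [κ, v]
    rw [← hD]
    field_simp
    have : 1 + t s ^ 2 = x s * x s + y s * y s := by linarith [hS s]
    rw [this]; ring
  have hv : ∀ s, HasDerivAt v (κ s * u s) s := by
    intro s
    refine ((hy s).mul (hr s)).congr_deriv ?_
    have := (hW s).ne'
    simp only [κ, u]
    rw [← hD]
    field_simp
    have : 1 + t s ^ 2 = x s * x s + y s * y s := by linarith [hS s]
    rw [this]; ring
  have huv : u 0 ^ 2 + v 0 ^ 2 = 1 := by
    have h3 := Real.sq_sqrt (hW 0).le
    have hq := (Real.sqrt_pos.2 (hW 0)).ne'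
    simp only [u, v, r]
    field_simp
    rw [h3]; linarith [hS 0]
  obtain ⟨θ₀, hc0, hs0⟩ : ∃ θ₀ : ℝ, Real.cos θ₀ = u 0 ∧ Real.sin θ₀ = v 0 := by
    have hn : ‖(⟨u 0, v 0⟩ : ℂ)‖ = 1 := by
      rw [← sq_eq_sq₀ (norm_nonneg _) zero_le_one, ← Complex.normSq_eq_norm_sq,
        Complex.normSq_apply]
      linarith
    refine ⟨Complex.arg ⟨u 0, v 0⟩, ?_, ?_⟩
    · have := Complex.norm_mul_cos_arg ⟨u 0, v 0⟩
      rwa [hn, one_mul] at this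
    · have := Complex.norm_mul_sin_arg ⟨u 0, v 0⟩
      rwa [hn, one_mul] at this
  let θ : ℝ → ℝ := fun s => θ₀ + ∫ a in (0 : ℝ)..s, κ a
  have hθ : ∀ s, HasStrictDerivAt θ (κ s) s := fun s =>
    (hκc.integral_hasStrictDerivAt 0 s).const_add θ₀
  have hθ0 : θ 0 = θ₀ := by simp [θ]
  have hF : ∀ s, u s * Real.cos (θ s) + v s * Real.sin (θ s) = 1 := by
    have hd : ∀ s, HasDerivAt (fun s => u s * Real.cos (θ s) + v s * Real.sin (θ s)) 0 s := by
      intro s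
      have hθs := (hθ s).hasDerivAt
      refine (((hu s).mul hθs.cos).add ((hv s).mul hθs.sin)).congr_deriv ?_
      ring
    intro s
    have := is_const_of_deriv_eq_zero (fun s => (hd s).differentiableAt) (fun s => (hd s).deriv) s 0
    rw [this, hθ0, hc0, hs0]; linarith
  have hG : ∀ s, v s * Real.cos (θ s) - u s * Real.sin (θ s) = 0 := by
    have hd : ∀ s, HasDerivAt (fun s => v s * Real.cos (θ s) - u s * Real.sin (θ s)) 0 s := by
      intro s
      have hθs := (hθ s).hasDerivAt
      refine (((hv s).mul hθs.cos).sub ((hu s).mul hθs.sin)).congr_deriv ?_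
      ring
    intro s
    have := is_const_of_deriv_eq_zero (fun s => (hd s).differentiableAt) (fun s => (hd s).deriv) s 0
    rw [this, hθ0, hc0, hs0]; ring
  refine ⟨θ, isLocalHomeomorph_of_strictDeriv hθ hκ0, fun s => ?_⟩
  have h1 := Real.sin_sq_add_cos_sq (θ s)
  change u s = _ ∧ v s = _
  constructor
  · linear_combination (-u s) * h1 + Real.cos (θ s) * hF s - Real.sin (θ s) * hG s
  · linear_combination (-v s) * h1 + Real.sin (θ s) * hF s + Real.cos (θ s) * hG s

theorem stmt_5 (T : ℝ) (hT : 0 < T) (α : ℝ → (Fin 3 → ℝ))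
    (hper : Function.Periodic α T) (hα : ContDiff ℝ 1 α)
    (hS : ∀ s : ℝ, α s ∈ pseudoSphere)
    (hsp : ∀ s : ℝ, 0 < lorentz (deriv α s) (deriv α s))
    (ψ : AddCircle T → waist)
    (hψ : ∀ s : ℝ, (ψ (s : AddCircle T) : Fin 3 → ℝ) = piProj (α s)) :
    IsCoveringMap ψ := by
  have hd : ∀ i s, HasDerivAt (fun s => α s i) (deriv α s i) s := by
    intro i s
    exact (hasDerivAt_pi.1 (hα.differentiable one_ne_zero s).hasDerivAt) i
  have hc : ∀ i, Continuous fun s => deriv α s i := fun i =>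
    (continuous_apply i).comp (hα.continuous_deriv le_rfl)
  obtain ⟨θ, hθ, hcs⟩ := exists_angle _ _ _ _ _ _ (hd 0) (hd 1) (hd 2) (hc 0) (hc 1) hS hsp
  have key : ψ ∘ ((↑) : ℝ → AddCircle T) = circleWaist ∘ Circle.exp ∘ θ := by
    funext s
    apply Subtype.ext
    have hl : lorentz (α s) aVec = -(α s 2) := by simp [lorentz, aVec]
    obtain ⟨h1, h2⟩ := hcs s
    rw [div_eq_inv_mul] at h1 h2
    simp only [Function.comp_apply]
    rw [hψ s]
    funext i
    fin_cases i
    · change piProj (α s) 0 = (Circle.exp (θ s) : ℂ).re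
      rw [Circle.coe_exp, Complex.exp_ofReal_mul_I_re, ← h1, piProj, hl]
      simp [aVec]; exact Or.inl rfl
    · change piProj (α s) 1 = (Circle.exp (θ s) : ℂ).im
      rw [Circle.coe_exp, Complex.exp_ofReal_mul_I_im, ← h2, piProj, hl]
      simp [aVec]; exact Or.inl rfl
    · change piProj (α s) 2 = (0 : ℝ)
      rw [← hψ]
      exact (ψ _).2.2
  have hcomp : IsLocalHomeomorph (ψ ∘ ((↑) : ℝ → AddCircle T)) := by
    rw [key]
    exact circleWaist.isLocalHomeomorph.comp (Circle.isCoveringMap_exp.isLocalHomeomorph.comp hθ)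
  have hcoe : IsLocalHomeomorph ((↑) : ℝ → AddCircle T) :=
    (AddCircle.isCoveringMap_coe T).isLocalHomeomorph
  have : Fact (0 < T) := ⟨hT⟩
  rw [← isLocalHomeomorph_iff_isCoveringMap, isLocalHomeomorph_iff_isLocalHomeomorphOn_univ]
  have h3 : IsLocalHomeomorphOn ψ (((↑) : ℝ → AddCircle T) '' Set.univ) :=
    IsLocalHomeomorphOn.of_comp_right hcomp.isLocalHomeomorphOn hcoe.isLocalHomeomorphOn
  have h4 : Set.range ((↑) : ℝ → AddCircle T) = Set.univ :=
    Set.range_eq_univ.2 QuotientAddGroup.mk_surjective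
  rwa [Set.image_univ, h4] at h3
end

section
/- There exist no spacelike null-homotopic closed curves in the pseudosphere: if α : 𝕊¹ → 𝕊²₁ is a closed spacelike C¹ curve, then α is not homotopic within 𝕊²₁ to a constant map. Equivalently, π ∘ α : 𝕊¹ → C is surjective and not null-homotopic in C. -/
/-- The first two coordinates as a complex number. -/
noncomputable def zc (p : Fin 3 → ℝ) : ℂ := ⟨p 0, p 1⟩

theorem zc_continuous : Continuous zc := by
  have : zc = fun p => Complex.equivRealProdCLM.symm (p 0, p 1) := by
    funext p
    apply Complex.ext <;> simp [zc]
  rw [this]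
  fun_prop

theorem zc_ne {p : Fin 3 → ℝ} (hp : lorentz p p = 1) : zc p ≠ 0 := by
  intro h
  have h0 : p 0 = 0 := congrArg Complex.re h
  have h1 : p 1 = 0 := congrArg Complex.im h
  simp only [lorentz, h0, h1] at hp
  nlinarith [sq_nonneg (p 2)]

/-- Direction of a point in a subset of the pseudosphere. -/
noncomputable def dirMap (S : Set (Fin 3 → ℝ)) (hS : ∀ p ∈ S, lorentz p p = 1) :
    C(S, Circle) where
  toFun p := ⟨zc p / ‖zc p‖, by
    have := zc_ne (hS p p.2)
    simp [Submonoid.unitSphere, this]⟩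
  continuous_toFun := by
    refine Continuous.subtype_mk ?_ _
    refine Continuous.div (zc_continuous.comp continuous_subtype_val)
      (Complex.continuous_ofReal.comp (zc_continuous.comp continuous_subtype_val).norm) ?_
    intro p
    have := zc_ne (hS p p.2)
    simpa using this

theorem lift_periodic (T : ℝ) (F : C(AddCircle T, Circle)) (hF : F.Nullhomotopic)
    (θ : ℝ → ℝ) (hθ : Continuous θ) (h : ∀ s : ℝ, F (s : AddCircle T) = Circle.exp (θ s)) :
    θ T = θ 0 := by
  obtain ⟨y, ⟨H⟩⟩ := hF
  obtain ⟨e, rfl⟩ := Circle.exp_surjective y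
  have H0 : ∀ a, H.symm.toContinuousMap (0, a) =
      Circle.exp (ContinuousMap.const (AddCircle T) e a) := by
    intro a
    simp
  set G := Circle.isCoveringMap_exp.liftHomotopy H.symm.toContinuousMap
    (ContinuousMap.const _ e) H0 with hG
  have hlift := Circle.isCoveringMap_exp.liftHomotopy_lifts H.symm.toContinuousMap
    (ContinuousMap.const _ e) H0
  have h1 : ∀ a, Circle.exp (G (1, a)) = F a := by
    intro a
    have := congrFun hlift (1, a)
    exact this.trans (H.symm.apply_one a)
  have h0 : Circle.exp (G (1, ((0 : ℝ) : AddCircle T))) = Circle.exp (θ 0) := by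
    rw [h1, h]
  have key : (fun s : ℝ => G (1, (s : AddCircle T)) + (θ 0 - G (1, ((0 : ℝ) : AddCircle T))))
      = θ := by
    refine Circle.isCoveringMap_exp.eq_of_comp_eq ?_ hθ ?_ 0 (by ring)
    · have : Continuous (fun s : ℝ => (s : AddCircle T)) := AddCircle.continuous_mk' T
      fun_prop
    · funext s
      simp only [Function.comp]
      rw [Circle.exp_add, Circle.exp_sub, h0, h1, h, div_self', mul_one]
  have k0 := congrFun key 0
  have kT := congrFun key T
  simp only [AddCircle.coe_period] at k0 kT
  rw [← k0, ← kT, QuotientAddGroup.mk_zero]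

theorem exists_angle_s6 (z : ℝ → ℂ) (hz : ContDiff ℝ 1 z) (hne : ∀ s, z s ≠ 0) :
    ∃ θ : ℝ → ℝ, (∀ s, HasDerivAt θ (deriv z s / z s).im s) ∧
      ∀ s, z s / ‖z s‖ = Circle.exp (θ s) := by
  have hc : Continuous (fun s => deriv z s / z s) :=
    (hz.continuous_deriv le_rfl).div hz.continuous hne
  set L : ℝ → ℂ := fun s => Complex.log (z 0) + ∫ t in (0 : ℝ)..s, deriv z t / z t with hL
  have hLd : ∀ s, HasDerivAt L (deriv z s / z s) s := fun s =>
    (intervalIntegral.integral_hasDerivAt_right (hc.intervalIntegrable _ _)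
      (hc.stronglyMeasurableAtFilter _ _) hc.continuousAt).const_add _
  have hzd : ∀ s, HasDerivAt z (deriv z s) s := fun s =>
    (hz.differentiable one_ne_zero s).hasDerivAt
  have hq : ∀ s, HasDerivAt (fun s => z s * Complex.exp (-L s)) 0 s := by
    intro s
    have e : z s * (deriv z s / z s) = deriv z s := mul_div_cancel₀ _ (hne s)
    have e2 : deriv z s * Complex.exp (-L s) +
        z s * (Complex.exp (-L s) * -(deriv z s / z s)) = 0 := by
      linear_combination -Complex.exp (-L s) * e
    have h := (hzd s).mul (hLd s).neg.cexp
    exact e2 ▸ h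
  have hexp : ∀ s, z s = Complex.exp (L s) := by
    intro s
    have h1 := is_const_of_deriv_eq_zero (fun s => (hq s).differentiableAt)
      (fun s => (hq s).deriv) s 0
    have h2 : L 0 = Complex.log (z 0) := by simp [hL]
    simp only [h2, Complex.exp_neg, Complex.exp_log (hne 0)] at h1
    rw [mul_inv_cancel₀ (hne 0)] at h1
    exact (mul_inv_eq_one₀ (Complex.exp_ne_zero _)).1 h1
  refine ⟨fun s => (L s).im, fun s => ?_, fun s => ?_⟩
  · exact Complex.imCLM.hasFDerivAt.comp_hasDerivAt s (hLd s)
  · rw [hexp s, Complex.norm_exp, Circle.coe_exp, Complex.ofReal_exp, ← Complex.exp_sub]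
    congr 1
    apply Complex.ext <;> simp

theorem zc_piProj (p : Fin 3 → ℝ) :
    zc (piProj p) = ((1 / Real.sqrt (1 + (p 2) ^ 2) : ℝ) : ℂ) * zc p := by
  apply Complex.ext <;> simp [zc, piProj, lorentz, aVec, Matrix.vecHead, Matrix.vecTail]

theorem dir_piProj (p : Fin 3 → ℝ) :
    zc (piProj p) / ‖zc (piProj p)‖ = zc p / ‖zc p‖ := by
  have h : 0 < 1 / Real.sqrt (1 + (p 2) ^ 2) := by positivity
  rw [zc_piProj, norm_mul, Complex.norm_real, Real.norm_of_nonneg h.le, Complex.ofReal_mul]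
  exact mul_div_mul_left _ _ (by exact_mod_cast h.ne')

theorem norm_zc {p : Fin 3 → ℝ} (hp : lorentz p p = 1) :
    ‖zc p‖ = Real.sqrt (1 + (p 2) ^ 2) := by
  rw [Complex.norm_eq_sqrt_sq_add_sq]
  congr 1
  simp only [zc, lorentz] at *
  linarith

theorem piProj_eq {p q : Fin 3 → ℝ} (hp : lorentz p p = 1) (hq : q ∈ waist)
    (h : zc p / ‖zc p‖ = zc q) : piProj p = q := by
  have e : zc (piProj p) = zc q := by
    rw [← h, norm_zc hp, zc_piProj]
    push_cast
    ring
  funext i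
  fin_cases i
  · exact congrArg Complex.re e
  · exact congrArg Complex.im e
  · have := hq.2
    simp [piProj, lorentz, aVec, this, Matrix.vecHead, Matrix.vecTail]

theorem stmt_6 (T : ℝ) (hT : 0 < T) (α : ℝ → (Fin 3 → ℝ))
    (hper : Function.Periodic α T) (hα : ContDiff ℝ 1 α)
    (hS : ∀ s : ℝ, α s ∈ pseudoSphere)
    (hsp : ∀ s : ℝ, 0 < lorentz (deriv α s) (deriv α s)) :
    (∀ β : C(AddCircle T, pseudoSphere),
       (∀ s : ℝ, (β (s : AddCircle T) : Fin 3 → ℝ) = α s) → ¬ β.Nullhomotopic) ∧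
    (∀ q ∈ waist, ∃ s : ℝ, piProj (α s) = q) ∧
    (∀ ψ : C(AddCircle T, waist),
       (∀ s : ℝ, (ψ (s : AddCircle T) : Fin 3 → ℝ) = piProj (α s)) →
       ¬ ψ.Nullhomotopic) := by
  have hS' : ∀ s, lorentz (α s) (α s) = 1 := hS
  have hcd : ∀ i, ContDiff ℝ 1 (fun s => α s i) := fun i => contDiff_pi.1 hα i
  have hd : ∀ i s, HasDerivAt (fun s => α s i) (deriv α s i) s := fun i s =>
    hasDerivAt_pi.1 (hα.differentiable one_ne_zero s).hasDerivAt i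
  have hzeq : (fun s => zc (α s)) =
      fun s => Complex.equivRealProdCLM.symm (α s 0, α s 1) := by
    funext s
    apply Complex.ext <;> simp [zc]
  have hz : ContDiff ℝ 1 (fun s => zc (α s)) := by
    rw [hzeq]
    exact Complex.equivRealProdCLM.symm.contDiff.comp ((hcd 0).prodMk (hcd 1))
  have hzd : ∀ s, deriv (fun s => zc (α s)) s = zc (deriv α s) := by
    intro s
    have h1 := (Complex.equivRealProdCLM.symm.hasFDerivAt
      (x := (α s 0, α s 1))).comp_hasDerivAt s ((hd 0 s).prodMk (hd 1 s))
    rw [hzeq]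
    refine h1.deriv.trans ?_
    apply Complex.ext <;> simp [zc]
  obtain ⟨θ, hθd, hθ⟩ := exists_angle_s6 _ hz (fun s => zc_ne (hS' s))
  have hθc : Continuous θ := continuous_iff_continuousAt.2 fun s => (hθd s).continuousAt
  have hW : ∀ s, deriv θ s ≠ 0 := by
    intro s h
    rw [(hθd s).deriv, hzd s, Complex.div_im] at h
    have hn : Complex.normSq (zc (α s)) ≠ 0 := by
      simpa using zc_ne (hS' s)
    have hw : α s 0 * deriv α s 1 - α s 1 * deriv α s 0 = 0 := by
      simp only [zc] at h hn
      field_simp at h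
      linarith
    have ht : α s 0 * deriv α s 0 + α s 1 * deriv α s 1 - α s 2 * deriv α s 2 = 0 := by
      have h1 := (((hd 0 s).mul (hd 0 s)).add ((hd 1 s).mul (hd 1 s))).sub
        ((hd 2 s).mul (hd 2 s))
      have h2 : HasDerivAt (fun _ : ℝ => (1 : ℝ)) 0 s := hasDerivAt_const s 1
      have h3 := h1.unique (h2.congr_of_eventuallyEq (Filter.Eventually.of_forall hS'))
      linarith
    have h1 := hS' s
    have h2 := hsp s
    simp only [lorentz] at h1 h2
    generalize α s 0 = x at *
    generalize α s 1 = y at *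
    generalize α s 2 = z at *
    generalize deriv α s 0 = x' at *
    generalize deriv α s 1 = y' at *
    generalize deriv α s 2 = z' at *
    have h3 : (1 + z * z) * (x' * x' + y' * y') = (z * z') * (z * z') := by
      have e1 : x * x' + y * y' = z * z' := by linarith
      rw [← e1, ← h1]
      linear_combination (x * y' - y * x') * hw
    nlinarith [mul_pos (show 0 < 1 + z * z by nlinarith) h2, sq_nonneg z']
  have hne : θ T ≠ θ 0 := by
    intro h
    obtain ⟨c, -, hc⟩ := exists_deriv_eq_zero hT hθc.continuousOn h.symm
    exact hW c hc
  refine ⟨?_, ?_, ?_⟩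
  · intro β hβ hnull
    refine hne (lift_periodic T _ (hnull.comp_right (dirMap pseudoSphere fun _ h => h)) θ hθc ?_)
    intro s
    apply Subtype.ext
    change zc (β s : Fin 3 → ℝ) / ‖zc (β s : Fin 3 → ℝ)‖ = _
    rw [hβ]
    exact hθ s
  · intro q hq
    have hq1 : ‖zc q‖ = 1 := by
      rw [norm_zc hq.1, hq.2]; simp
    obtain ⟨φ, hφ⟩ := Circle.exp_surjective ⟨zc q, by simp [Submonoid.unitSphere, hq1]⟩
    have hφ' : (Circle.exp φ : ℂ) = zc q := congrArg Subtype.val hφ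
    have hTT : Circle.exp (θ T) = Circle.exp (θ 0) := by
      apply Subtype.ext
      have := hper 0
      rw [zero_add] at this
      rw [← hθ T, ← hθ 0, this]
    obtain ⟨m, hm⟩ := Circle.exp_eq_exp.1 hTT
    have hm0 : m ≠ 0 := by
      rintro rfl
      exact hne (by simpa using hm)
    have hmem := toIcoMod_mem_Ico Real.two_pi_pos (min (θ 0) (θ T)) φ
    have hlen : min (θ 0) (θ T) + 2 * Real.pi ≤ max (θ 0) (θ T) := by
      have hpi := Real.two_pi_pos
      rcases lt_or_gt_of_ne hm0 with h | h
      · have : (m : ℝ) ≤ -1 := by exact_mod_cast Int.le_sub_one_of_lt h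
        have h2 : θ T + 2 * Real.pi ≤ θ 0 := by nlinarith
        exact (add_le_add_left (min_le_right _ _) _).trans (h2.trans (le_max_left _ _))
      · have : (1 : ℝ) ≤ m := by exact_mod_cast h
        have h2 : θ 0 + 2 * Real.pi ≤ θ T := by nlinarith
        exact (add_le_add_left (min_le_left _ _) _).trans (h2.trans (le_max_right _ _))
    obtain ⟨s, -, hs⟩ := intermediate_value_uIcc (a := 0) (b := T) hθc.continuousOn
      (show toIcoMod Real.two_pi_pos (min (θ 0) (θ T)) φ ∈ Set.uIcc (θ 0) (θ T) from
        ⟨hmem.1, hmem.2.le.trans hlen⟩)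
    refine ⟨s, piProj_eq (hS' s) hq ?_⟩
    rw [← hφ', hθ s, hs]
    congr 1
    refine Circle.exp_eq_exp.2 ⟨-toIcoDiv Real.two_pi_pos (min (θ 0) (θ T)) φ, ?_⟩
    rw [toIcoMod, zsmul_eq_mul]
    push_cast
    ring
  · intro ψ hψ hnull
    refine hne (lift_periodic T _ (hnull.comp_right (dirMap waist fun _ h => h.1)) θ hθc ?_)
    intro s
    apply Subtype.ext
    change zc (ψ s : Fin 3 → ℝ) / ‖zc (ψ s : Fin 3 → ℝ)‖ = _
    rw [hψ, dir_piProj]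
    exact hθ s
end

section
/- Let α : 𝕊¹ → 𝕊²₁ be a closed spacelike C¹ curve which is injective (an embedding), and let Γ = α(𝕊¹). Then the restriction of π to Γ is a bijection of Γ onto the waist C; consequently Γ is a geodesic graph over C, i.e. there is a function u : C → ℝ such that Γ = { cosh(u(q))·q + sinh(u(q))·a : q ∈ C }. -/
open Real in
/-- Polar lift of a planar curve with positive angular momentum. -/
lemma polar_lift (x y x' y' : ℝ → ℝ) (hx : ∀ s, HasDerivAt x (x' s) s)
    (hy : ∀ s, HasDerivAt y (y' s) s) (cx : Continuous x') (cy : Continuous y')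
    (hr : ∀ s, 0 < x s ^ 2 + y s ^ 2) :
    ∃ θ : ℝ → ℝ, (∀ s, HasDerivAt θ ((x s * y' s - y s * x' s) / (x s ^ 2 + y s ^ 2)) s) ∧
      (∀ s, x s = √(x s ^ 2 + y s ^ 2) * cos (θ s)) ∧
      (∀ s, y s = √(x s ^ 2 + y s ^ 2) * sin (θ s)) := by
  have hxc : Continuous x := continuous_iff_continuousAt.2 fun s => (hx s).continuousAt
  have hyc : Continuous y := continuous_iff_continuousAt.2 fun s => (hy s).continuousAt
  set f : ℝ → ℝ := fun s => (x s * y' s - y s * x' s) / (x s ^ 2 + y s ^ 2) with hf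
  have hfc : Continuous f := by
    apply Continuous.div (by fun_prop) (by fun_prop)
    intro s; exact (hr s).ne'
  set I : ℝ → ℝ := fun s => ∫ t in (0:ℝ)..s, f t with hI
  have hId : ∀ s, HasDerivAt I (f s) s := fun s => hfc.integral_hasStrictDerivAt 0 s |>.hasDerivAt
  set r : ℝ → ℝ := fun s => √(x s ^ 2 + y s ^ 2) with hrdef
  have hrpos : ∀ s, 0 < r s := fun s => Real.sqrt_pos.2 (hr s)
  have hrsq : ∀ s, r s ^ 2 = x s ^ 2 + y s ^ 2 := fun s => Real.sq_sqrt (hr s).le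
  have hrd : ∀ s, HasDerivAt r ((x s * x' s + y s * y' s) / r s) s := by
    intro s
    have := (((hx s).pow 2).add ((hy s).pow 2)).sqrt (hr s).ne'
    refine this.congr_deriv ?_
    change _ / (2 * r s) = _
    have := (hrpos s).ne'
    field_simp
    simp
    ring
  have hc : ∀ s, HasDerivAt (fun s => x s / r s) (- f s * (y s / r s)) s := by
    intro s
    refine ((hx s).div (hrd s) (hrpos s).ne').congr_deriv ?_
    have h1 := (hrpos s).ne'
    have h2 := hrsq s
    simp only [hf]
    rw [← h2]
    field_simp
    rw [h2]; ring
  have hd : ∀ s, HasDerivAt (fun s => y s / r s) (f s * (x s / r s)) s := by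
    intro s
    refine ((hy s).div (hrd s) (hrpos s).ne').congr_deriv ?_
    have h1 := (hrpos s).ne'
    have h2 := hrsq s
    simp only [hf]
    rw [← h2]
    field_simp
    rw [h2]; ring
  set A : ℝ → ℝ := fun s => x s / r s * cos (I s) + y s / r s * sin (I s) with hA
  set B : ℝ → ℝ := fun s => y s / r s * cos (I s) - x s / r s * sin (I s) with hB
  have hAd : ∀ s, HasDerivAt A 0 s := by
    intro s
    refine (((hc s).mul (hId s).cos).add ((hd s).mul (hId s).sin)).congr_deriv ?_
    ring
  have hBd : ∀ s, HasDerivAt B 0 s := by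
    intro s
    refine (((hd s).mul (hId s).cos).sub ((hc s).mul (hId s).sin)).congr_deriv ?_
    ring
  have hAc : ∀ s, A s = A 0 := fun s => is_const_of_deriv_eq_zero
    (fun s => (hAd s).differentiableAt) (fun s => (hAd s).deriv) s 0
  have hBc : ∀ s, B s = B 0 := fun s => is_const_of_deriv_eq_zero
    (fun s => (hBd s).differentiableAt) (fun s => (hBd s).deriv) s 0
  have hcd : ∀ s, (x s / r s) ^ 2 + (y s / r s) ^ 2 = 1 := by
    intro s
    have h1 := (hrpos s).ne'
    have h2 := hrsq s
    field_simp
    linarith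
  have hAB : A 0 ^ 2 + B 0 ^ 2 = 1 := by
    have h1 := hcd 0
    have h2 := sin_sq_add_cos_sq (I 0)
    simp only [hA, hB]
    linear_combination h1 + ((x 0 / r 0) ^ 2 + (y 0 / r 0) ^ 2) * h2
  obtain ⟨θ0, hA0, hB0⟩ : ∃ θ0 : ℝ, A 0 = cos θ0 ∧ B 0 = sin θ0 := by
    have hn : ‖(⟨A 0, B 0⟩ : ℂ)‖ = 1 := by
      rw [← sq_eq_sq₀ (norm_nonneg _) zero_le_one, Complex.sq_norm, Complex.normSq_mk]
      linarith
    have h0 : (⟨A 0, B 0⟩ : ℂ) ≠ 0 := by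
      intro h; rw [h] at hn; simp at hn
    refine ⟨Complex.arg ⟨A 0, B 0⟩, ?_, ?_⟩
    · rw [Complex.cos_arg h0, hn]; simp
    · rw [Complex.sin_arg, hn]; simp
  refine ⟨fun s => θ0 + I s, fun s => (hId s).const_add θ0, ?_, ?_⟩
  · intro s
    have h1 := (hrpos s).ne'
    have hx0 : x s / r s = A s * cos (I s) - B s * sin (I s) := by
      have h2 := sin_sq_add_cos_sq (I s)
      simp only [hA, hB]
      linear_combination (- (x s / r s)) * h2
    rw [hAc, hBc, hA0, hB0, ← cos_add] at hx0
    change x s = r s * _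
    rw [← hx0]; field_simp
  · intro s
    have h1 := (hrpos s).ne'
    have hx0 : y s / r s = B s * cos (I s) + A s * sin (I s) := by
      have h2 := sin_sq_add_cos_sq (I s)
      simp only [hA, hB]
      linear_combination (- (y s / r s)) * h2
    rw [hAc, hBc, hA0, hB0, ← sin_add] at hx0
    change y s = r s * _
    rw [← hx0]; field_simp

open Real in
lemma cos_sin_eq_imp (a b : ℝ) (hc : cos a = cos b) (hs : sin a = sin b) :
    ∃ k : ℤ, a - b = 2 * π * k :=
  Real.Angle.angle_eq_iff_two_pi_dvd_sub.1 (Real.Angle.cos_sin_inj hc hs)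

open Real in
lemma core (T : ℝ) (hT : 0 < T) (x y z x' y' : ℝ → ℝ)
    (hx : ∀ s, HasDerivAt x (x' s) s)
    (hy : ∀ s, HasDerivAt y (y' s) s) (cx : Continuous x') (cy : Continuous y')
    (cz : Continuous z)
    (hr : ∀ s, x s ^ 2 + y s ^ 2 = 1 + z s ^ 2)
    (hw : ∀ s, 0 < x s * y' s - y s * x' s)
    (px : ∀ s, x (s + T) = x s) (py : ∀ s, y (s + T) = y s) (pz : ∀ s, z (s + T) = z s)
    (hinj : ∀ s t, x s = x t → y s = y t → z s = z t → ∃ n : ℤ, t = s + n * T) :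
    ∃ θ : ℝ → ℝ, StrictMono θ ∧ Function.Surjective θ ∧
      (∀ s, x s = √(1 + z s ^ 2) * cos (θ s)) ∧
      (∀ s, y s = √(1 + z s ^ 2) * sin (θ s)) ∧
      ∀ s, ∀ n : ℤ, θ (s + n * T) = θ s + n * (2 * π) := by
  have hrp : ∀ s, 0 < x s ^ 2 + y s ^ 2 := fun s => by rw [hr]; positivity
  obtain ⟨θ, hθ, hxθ, hyθ⟩ := polar_lift x y x' y' hx hy cx cy hrp
  simp only [hr] at hxθ hyθ
  have hmono : StrictMono θ := strictMono_of_deriv_pos fun s => by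
    rw [(hθ s).deriv]; exact div_pos (hw s) (hrp s)
  have hθc : Continuous θ := continuous_iff_continuousAt.2 fun s => (hθ s).continuousAt
  have hrne : ∀ s, √(1 + z s ^ 2) ≠ 0 := fun s => (Real.sqrt_pos.2 (by positivity)).ne'
  have px' : ∀ s, x' (s + T) = x' s := fun s => by
    have h1 := (hx (s + T)).comp_add_const s T
    simp only [px] at h1
    exact h1.unique (hx s)
  have py' : ∀ s, y' (s + T) = y' s := fun s => by
    have h1 := (hy (s + T)).comp_add_const s T
    simp only [py] at h1
    exact h1.unique (hy s)
  have hD : ∀ s, HasDerivAt (fun s => θ (s + T) - θ s) 0 s := fun s => by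
    refine (((hθ (s + T)).comp_add_const s T).sub (hθ s)).congr_deriv ?_
    rw [px, py, px', py', sub_self]
  have hDc : ∀ s, θ (s + T) - θ s = θ (0 + T) - θ 0 := fun s => is_const_of_deriv_eq_zero
    (fun s => (hD s).differentiableAt) (fun s => (hD s).deriv) s 0
  obtain ⟨k, hk⟩ : ∃ k : ℤ, θ (0 + T) - θ 0 = 2 * π * k := by
    apply cos_sin_eq_imp
    · have h1 := hxθ (0 + T)
      rw [px, pz, hxθ 0] at h1
      exact (mul_left_cancel₀ (hrne 0) h1).symm
    · have h1 := hyθ (0 + T)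
      rw [py, pz, hyθ 0] at h1
      exact (mul_left_cancel₀ (hrne 0) h1).symm
  have hDpos : 0 < 2 * π * (k : ℝ) := by
    rw [← hk]; have := hmono (show (0:ℝ) < 0 + T by linarith); linarith
  have hstep : ∀ s, θ (s + T) = θ s + 2 * π * k := fun s => by
    have := hDc s; linarith
  have hZ : ∀ s, ∀ n : ℤ, θ (s + n * T) = θ s + n * (2 * π * k) := by
    intro s n
    induction n using Int.induction_on with
    | zero => simp
    | succ i ih =>
      have := hstep (s + (i : ℤ) * T)
      rw [show s + ((i + 1 : ℤ) : ℝ) * T = s + (i : ℤ) * T + T by push_cast; ring, this, ih]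
      push_cast; ring
    | pred i ih =>
      have := hstep (s + ((-i - 1 : ℤ) : ℝ) * T)
      rw [show s + ((-i - 1 : ℤ) : ℝ) * T + T = s + ((-i : ℤ) : ℝ) * T by push_cast; ring, ih] at this
      push_cast at this ⊢
      linarith
  have hsurj : Function.Surjective θ := by
    intro v
    apply mem_range_of_exists_le_of_exists_ge hθc
    · obtain ⟨n, hn⟩ := exists_int_lt ((v - θ 0) / (2 * π * k))
      refine ⟨0 + n * T, ?_⟩
      rw [hZ]
      rw [lt_div_iff₀ hDpos] at hn
      linarith
    · obtain ⟨n, hn⟩ := exists_int_gt ((v - θ 0) / (2 * π * k))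
      refine ⟨0 + n * T, ?_⟩
      rw [hZ]
      rw [div_lt_iff₀ hDpos] at hn
      linarith
  have hk1 : k = 1 := by
    let e := hmono.orderIsoOfSurjective θ hsurj
    have he : ∀ s, θ (e.symm s) = s := fun s => e.apply_symm_apply s
    let φ : ℝ → ℝ := fun s => e.symm (θ s + 2 * π)
    have hφ : ∀ s, θ (φ s) = θ s + 2 * π := fun s => he _
    have hφc : Continuous φ := e.symm.continuous.comp (by fun_prop)
    have pzz : Function.Periodic z T := pz
    obtain ⟨M, -, hM⟩ := (isCompact_Icc (a := (0:ℝ)) (b := T)).exists_isMaxOn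
      ⟨0, by simp [hT.le]⟩ cz.continuousOn
    obtain ⟨m, -, hm⟩ := (isCompact_Icc (a := (0:ℝ)) (b := T)).exists_isMinOn
      ⟨0, by simp [hT.le]⟩ cz.continuousOn
    have hM' : ∀ s, z s ≤ z M := fun s => by
      obtain ⟨t, ht, hst⟩ := pzz.exists_mem_Ico₀ hT s
      rw [hst]; exact hM ⟨ht.1, ht.2.le⟩
    have hm' : ∀ s, z m ≤ z s := fun s => by
      obtain ⟨t, ht, hst⟩ := pzz.exists_mem_Ico₀ hT s
      rw [hst]; exact hm ⟨ht.1, ht.2.le⟩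
    obtain ⟨s, hs⟩ := mem_range_of_exists_le_of_exists_ge (c := (0:ℝ))
      (f := fun s => z (φ s) - z s) (by fun_prop)
      ⟨M, by have := hM' (φ M); linarith⟩ ⟨m, by have := hm' (φ m); linarith⟩
    have hzs : z (φ s) = z s := by simp only at hs; linarith
    obtain ⟨n, hn⟩ := hinj s (φ s)
      (by rw [hxθ s, hxθ (φ s), hzs, hφ, cos_add_two_pi])
      (by rw [hyθ s, hyθ (φ s), hzs, hφ, sin_add_two_pi]) hzs.symm
    have h1 := hZ s n
    rw [← hn, hφ] at h1
    have h2 : (n * k : ℝ) = 1 := by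
      have hp := pi_pos
      have : (2 * π) * (n * k : ℝ) = (2 * π) * 1 := by linarith
      exact mul_left_cancel₀ (by positivity) this
    have h3 : n * k = 1 := by exact_mod_cast h2
    have h4 : 0 < k := by
      have : (0:ℝ) < k := pos_of_mul_pos_right hDpos (by positivity)
      exact_mod_cast this
    rcases Int.mul_eq_one_iff_eq_one_or_neg_one.1 h3 with h | h
    · exact h.2
    · omega
  refine ⟨θ, hmono, hsurj, hxθ, hyθ, fun s n => ?_⟩
  rw [hZ, hk1]; simp

lemma piProj_eq_s7 (p : Fin 3 → ℝ) :
    piProj p = ![p 0 / √(1 + p 2 ^ 2), p 1 / √(1 + p 2 ^ 2), 0] := by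
  have hl : lorentz p aVec = -p 2 := by simp [lorentz, aVec]
  unfold piProj
  rw [hl, neg_sq]
  ext i
  fin_cases i
  · change 1 / √(1 + p 2 ^ 2) * (p 0 + -p 2 * 0) = p 0 / √(1 + p 2 ^ 2)
    ring
  · change 1 / √(1 + p 2 ^ 2) * (p 1 + -p 2 * 0) = p 1 / √(1 + p 2 ^ 2)
    ring
  · change 1 / √(1 + p 2 ^ 2) * (p 2 + -p 2 * 1) = 0
    ring

open Real in
lemma bij_of_pos (T : ℝ) (hT : 0 < T) (α : ℝ → (Fin 3 → ℝ))
    (hper : Function.Periodic α T) (hα : ContDiff ℝ 1 α)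
    (hS : ∀ s : ℝ, α s ∈ pseudoSphere)
    (hw : ∀ s, 0 < α s 0 * deriv α s 1 - α s 1 * deriv α s 0)
    (hinj : ∀ s t : ℝ, α s = α t → (s : AddCircle T) = (t : AddCircle T)) :
    Set.BijOn piProj (Set.range α) waist := by
  have hd : ∀ s, HasDerivAt α (deriv α s) s := fun s =>
    (hα.differentiable (by norm_num) s).hasDerivAt
  have hd' : ∀ i s, HasDerivAt (fun s => α s i) (deriv α s i) s := fun i s =>
    (hasDerivAt_pi.1 (hd s)) i
  have hcd : Continuous (deriv α) := hα.continuous_deriv (by norm_num)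
  have hc := hα.continuous
  have hS' : ∀ s, α s 0 ^ 2 + α s 1 ^ 2 = 1 + α s 2 ^ 2 := fun s => by
    have := hS s
    simp only [pseudoSphere, lorentz, Set.mem_ofPred_eq] at this
    linarith
  obtain ⟨θ, hmono, hsurj, hxθ, hyθ, hZ⟩ := core T hT (fun s => α s 0) (fun s => α s 1)
    (fun s => α s 2) (fun s => deriv α s 0) (fun s => deriv α s 1) (hd' 0) (hd' 1)
    (by fun_prop) (by fun_prop) (by fun_prop) hS' hw
    (fun s => by simp only [hper s]) (fun s => by simp only [hper s]) (fun s => by simp only [hper s])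
    (by
      intro s t h0 h1 h2
      have h : α s = α t := by
        ext i; fin_cases i
        · exact h0
        · exact h1
        · exact h2
      have h3 := hinj s t h
      obtain ⟨n, hn⟩ := AddSubgroup.mem_zmultiples_iff.1 (QuotientAddGroup.eq.1 h3)
      refine ⟨n, ?_⟩
      rw [zsmul_eq_mul] at hn
      linarith)
  have hrne : ∀ s, √(1 + α s 2 ^ 2) ≠ 0 := fun s => (Real.sqrt_pos.2 (by positivity)).ne'
  have hpi : ∀ s, piProj (α s) = ![cos (θ s), sin (θ s), 0] := by
    intro s
    have h1 : α s 0 / √(1 + α s 2 ^ 2) = cos (θ s) := by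
      rw [div_eq_iff (hrne s), mul_comm]; exact hxθ s
    have h2 : α s 1 / √(1 + α s 2 ^ 2) = sin (θ s) := by
      rw [div_eq_iff (hrne s), mul_comm]; exact hyθ s
    rw [piProj_eq_s7, h1, h2]
  refine ⟨?_, ?_, ?_⟩
  · rintro _ ⟨s, rfl⟩
    rw [hpi]
    have := sin_sq_add_cos_sq (θ s)
    refine ⟨?_, ?_⟩
    · simp [lorentz]; linarith
    · simp
  · rintro _ ⟨s, rfl⟩ _ ⟨t, rfl⟩ h
    rw [hpi, hpi] at h
    have h0 := congrFun h 0
    have h1 := congrFun h 1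
    simp at h0 h1
    obtain ⟨k, hk⟩ := cos_sin_eq_imp _ _ h0 h1
    have h2 : θ s = θ (t + k * T) := by rw [hZ]; linarith
    rw [hmono.injective h2]
    exact hper.int_mul k t
  · rintro q ⟨hq, hq2⟩
    have hq1 : q 0 ^ 2 + q 1 ^ 2 = 1 := by
      simp only [lorentz, hq2] at hq; linarith
    have hn : ‖(⟨q 0, q 1⟩ : ℂ)‖ = 1 := by
      rw [← sq_eq_sq₀ (norm_nonneg _) zero_le_one, Complex.sq_norm, Complex.normSq_mk]
      linarith
    have h0 : (⟨q 0, q 1⟩ : ℂ) ≠ 0 := by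
      intro h; rw [h] at hn; simp at hn
    obtain ⟨s, hs⟩ := hsurj (Complex.arg ⟨q 0, q 1⟩)
    refine ⟨α s, ⟨s, rfl⟩, ?_⟩
    rw [hpi, hs, Complex.cos_arg h0, Complex.sin_arg, hn]
    ext i
    fin_cases i
    · simp
    · simp
    · simp [hq2]

open Real in
lemma recon (p : Fin 3 → ℝ) :
    p = cosh (arsinh (p 2)) • piProj p + sinh (arsinh (p 2)) • aVec := by
  have hrne : √(1 + p 2 ^ 2) ≠ 0 := (Real.sqrt_pos.2 (by positivity)).ne'
  rw [piProj_eq_s7, cosh_arsinh, sinh_arsinh]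
  ext i
  fin_cases i
  · simp [aVec]; field_simp
  · simp [aVec]; field_simp
  · simp [aVec]

theorem stmt_7 (T : ℝ) (hT : 0 < T) (α : ℝ → (Fin 3 → ℝ))
    (hper : Function.Periodic α T) (hα : ContDiff ℝ 1 α)
    (hS : ∀ s : ℝ, α s ∈ pseudoSphere)
    (hsp : ∀ s : ℝ, 0 < lorentz (deriv α s) (deriv α s))
    (hinj : ∀ s t : ℝ, α s = α t → (s : AddCircle T) = (t : AddCircle T)) :
    Set.BijOn piProj (Set.range α) waist ∧
    ∃ u : (Fin 3 → ℝ) → ℝ,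
      Set.range α =
        {x | ∃ q ∈ waist, x = Real.cosh (u q) • q + Real.sinh (u q) • aVec} := by
  have hd : ∀ s, HasDerivAt α (deriv α s) s := fun s =>
    (hα.differentiable (by norm_num) s).hasDerivAt
  have hd' : ∀ i s, HasDerivAt (fun s => α s i) (deriv α s i) s := fun i s =>
    (hasDerivAt_pi.1 (hd s)) i
  have hcd : Continuous (deriv α) := hα.continuous_deriv (by norm_num)
  have hc := hα.continuous
  have hS' : ∀ s, α s 0 ^ 2 + α s 1 ^ 2 = 1 + α s 2 ^ 2 := fun s => by
    have := hS s
    simp only [pseudoSphere, lorentz, Set.mem_ofPred_eq] at this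
    linarith
  have hS1 : ∀ s, α s 0 * deriv α s 0 + α s 1 * deriv α s 1 = α s 2 * deriv α s 2 := fun s => by
    have h1 := ((hd' 0 s).pow 2).add ((hd' 1 s).pow 2)
    have h2 := ((hd' 2 s).pow 2).const_add 1
    have h3 : ((fun s => α s 0) ^ 2 + (fun s => α s 1) ^ 2 : ℝ → ℝ)
        = fun t => 1 + ((fun s => α s 2) ^ 2 : ℝ → ℝ) t := by
      funext t; exact hS' t
    rw [h3] at h1
    have h4 := h1.unique h2
    simp at h4
    linarith
  have hwne : ∀ s, α s 0 * deriv α s 1 - α s 1 * deriv α s 0 ≠ 0 := by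
    intro s h0
    have h1 := hS1 s
    have h2 := hS' s
    have h3 := hsp s
    simp only [lorentz] at h3
    have h4 : 0 < 1 + α s 2 ^ 2 := by positivity
    have h5 := mul_pos h4 h3
    have h6 : (1 + α s 2 ^ 2) * (deriv α s 0 * deriv α s 0 + deriv α s 1 * deriv α s 1
        - deriv α s 2 * deriv α s 2) = - deriv α s 2 ^ 2 := by
      linear_combination (-(deriv α s 0 ^ 2 + deriv α s 1 ^ 2)) * h2 +
        (α s 0 * deriv α s 1 - α s 1 * deriv α s 0) * h0 +
        (α s 0 * deriv α s 0 + α s 1 * deriv α s 1 + α s 2 * deriv α s 2) * h1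
    nlinarith [sq_nonneg (deriv α s 2)]
  have hwc : Continuous fun s => α s 0 * deriv α s 1 - α s 1 * deriv α s 0 := by fun_prop
  have hbij : Set.BijOn piProj (Set.range α) waist := by
    by_cases hpos : ∀ s, 0 < α s 0 * deriv α s 1 - α s 1 * deriv α s 0
    · exact bij_of_pos T hT α hper hα hS hpos hinj
    · have hneg : ∀ s, α s 0 * deriv α s 1 - α s 1 * deriv α s 0 < 0 := by
        push Not at hpos
        obtain ⟨s₀, hs₀⟩ := hpos
        intro s
        by_contra h
        push Not at h
        obtain ⟨t, ht⟩ := mem_range_of_exists_le_of_exists_ge hwc ⟨s₀, hs₀⟩ ⟨s, h⟩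
        exact hwne t ht
      have hrange : Set.range α = Set.range (fun s => α (-s)) :=
        (neg_surjective.range_comp α).symm
      rw [hrange]
      refine bij_of_pos T hT (fun s => α (-s)) ?_ (hα.comp contDiff_neg) (fun s => hS _) ?_ ?_
      · intro s
        have := hper (-(s + T))
        simp only at this ⊢
        rw [← this]; congr 1; ring
      · intro s
        rw [deriv_comp_neg]
        have := hneg (-s)
        simp only [Pi.neg_apply]
        linarith
      · intro s t h
        have := hinj _ _ h
        simpa using this
  refine ⟨hbij, ?_⟩
  have hsur : ∀ q, q ∈ waist → ∃ p, p ∈ Set.range α ∧ piProj p = q :=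
    fun q hq => hbij.surjOn hq
  choose! g hg1 hg2 using hsur
  refine ⟨fun q => Real.arsinh (g q 2), ?_⟩
  ext p
  constructor
  · intro hp
    refine ⟨piProj p, hbij.mapsTo hp, ?_⟩
    have h1 : g (piProj p) = p :=
      hbij.injOn (hg1 _ (hbij.mapsTo hp)) hp (hg2 _ (hbij.mapsTo hp))
    simp only [h1]
    exact recon p
  · rintro ⟨q, hq, rfl⟩
    have h1 := recon (g q)
    rw [hg2 _ hq] at h1
    simp only
    rw [← h1]
    exact hg1 _ hq
end

section
/- Let α : 𝕊¹ → 𝕊²₁ be a closed embedded (injective) spacelike C¹ curve and let Γ = α(𝕊¹). Then the vertical orthogonal projection Π onto the plane P = {x₃ = 0}, Π(x) = (x₁, x₂, 0), is injective on Γ; that is, Γ is a graph over the plane P. -/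
/-- Vertical orthogonal projection Π(x) = (x₁, x₂, 0) onto the plane x₃ = 0. -/
def vertProj (x : Fin 3 → ℝ) : Fin 3 → ℝ := ![x 0, x 1, 0]

theorem core_aux (T : ℝ) (hT : 0 < T) (c : ℝ) (θ z : ℝ → ℝ) (hθc : Continuous θ) (hz : Continuous z)
    (hmono : StrictMono θ) (hθ : ∀ s, θ (s + T) = θ s + c) (hzp : Function.Periodic z T)
    (hinj : ∀ (s t : ℝ) (n : ℤ), θ s = θ t + n * (2 * Real.pi) → z s = z t →
      ∃ m : ℤ, s = t + m * T) :
    ∀ (s t : ℝ) (n : ℤ), θ s = θ t + n * (2 * Real.pi) → ∃ m : ℤ, s = t + m * T := by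
  have hc : 0 < c := by
    have h1 : θ 0 < θ (0 + T) := hmono (by linarith)
    rw [hθ] at h1
    linarith
  have hnat : ∀ (n : ℕ) (s : ℝ), θ (s + n * T) = θ s + n * c := by
    intro n
    induction n with
    | zero => intro s; simp
    | succ k ih =>
      intro s
      have : s + ((k + 1 : ℕ) : ℝ) * T = (s + k * T) + T := by push_cast; ring
      rw [this, hθ, ih]; push_cast; ring
  have hint : ∀ (n : ℤ) (s : ℝ), θ (s + n * T) = θ s + n * c := by
    intro n s
    rcases Int.eq_nat_or_neg n with ⟨k, rfl | rfl⟩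
    · simpa using hnat k s
    · have := hnat k (s + ((-(k : ℤ) : ℤ) : ℝ) * T)
      push_cast at this ⊢
      have h2 : s + -(k : ℝ) * T + k * T = s := by ring
      rw [h2] at this
      linarith
  have hsurj : Function.Surjective θ := by
    intro y
    apply mem_range_of_exists_le_of_exists_ge hθc
    · obtain ⟨n, hn⟩ := exists_nat_gt ((θ 0 - y) / c)
      refine ⟨0 + ((-(n : ℤ) : ℤ) : ℝ) * T, ?_⟩
      rw [hint]
      rw [div_lt_iff₀ hc] at hn
      push_cast
      linarith
    · obtain ⟨n, hn⟩ := exists_nat_gt ((y - θ 0) / c)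
      refine ⟨0 + (n : ℝ) * T, ?_⟩
      rw [hnat]
      rw [div_lt_iff₀ hc] at hn
      linarith
  let e : ℝ ≃o ℝ := hmono.orderIsoOfSurjective θ hsurj
  have he : ∀ s, e s = θ s := fun s => rfl
  have hes : ∀ u, θ (e.symm u) = u := fun u => by rw [← he]; simp
  have hec : Continuous e.symm := e.symm.continuous
  have hcpt : IsCompact (Set.range z) := hzp.compact_of_continuous hT.ne' hz
  obtain ⟨_, ⟨a, rfl⟩, ha⟩ := hcpt.exists_isGreatest (Set.range_nonempty z)
  obtain ⟨_, ⟨b, rfl⟩, hb⟩ := hcpt.exists_isLeast (Set.range_nonempty z)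
  have hg : Continuous (fun u => z (e.symm (u + 2 * Real.pi)) - z (e.symm u)) := by fun_prop
  have h0 : (0 : ℝ) ∈ Set.range (fun u => z (e.symm (u + 2 * Real.pi)) - z (e.symm u)) := by
    apply mem_range_of_exists_le_of_exists_ge hg
    · refine ⟨e a, ?_⟩
      have := ha ⟨e.symm (e a + 2 * Real.pi), rfl⟩
      simpa using this
    · refine ⟨e b, ?_⟩
      have := hb ⟨e.symm (e b + 2 * Real.pi), rfl⟩
      simpa using this
  obtain ⟨u, hu⟩ := h0
  obtain ⟨m, hm⟩ := hinj (e.symm (u + 2 * Real.pi)) (e.symm u) 1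
    (by rw [hes, hes]; simp) (by simpa [sub_eq_zero] using hu)
  have hpi : 2 * Real.pi = m * c := by
    have := congrArg θ hm
    rw [hint, hes, hes] at this
    linarith
  intro s t n h
  refine ⟨n * m, hmono.injective ?_⟩
  rw [h, hint, hpi]
  push_cast
  ring

theorem stmt_8 (T : ℝ) (hT : 0 < T) (α : ℝ → (Fin 3 → ℝ))
    (hper : Function.Periodic α T) (hα : ContDiff ℝ 1 α)
    (hS : ∀ s : ℝ, α s ∈ pseudoSphere)
    (hsp : ∀ s : ℝ, 0 < lorentz (deriv α s) (deriv α s))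
    (hinj : ∀ s t : ℝ, α s = α t → (s : AddCircle T) = (t : AddCircle T)) :
    Set.InjOn vertProj (Set.range α) := by
  have hS' : ∀ s, α s 0 * α s 0 + α s 1 * α s 1 - α s 2 * α s 2 = 1 := hS
  have hd : ∀ s i, HasDerivAt (fun s => α s i) (deriv α s i) s := fun s i =>
    hasDerivAt_pi.1 ((hα.differentiable one_ne_zero) s).hasDerivAt i
  have hdc : Continuous (deriv α) := hα.continuous_deriv le_rfl
  have hαc : Continuous α := hα.continuous
  have hpd : ∀ s, deriv α (s + T) = deriv α s := by
    intro s
    rw [← deriv_comp_add_const]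
    congr 1
    funext x
    exact hper x
  let F : ℝ → ℂ := fun s => ⟨α s 0, α s 1⟩
  let F' : ℝ → ℂ := fun s => ⟨deriv α s 0, deriv α s 1⟩
  have hFe : F = fun s => ((α s 0 : ℝ) : ℂ) + ((α s 1 : ℝ) : ℂ) * Complex.I := by
    funext s; exact (Complex.mk_eq_add_mul_I _ _)
  have hFe' : F' = fun s => ((deriv α s 0 : ℝ) : ℂ) + ((deriv α s 1 : ℝ) : ℂ) * Complex.I := by
    funext s; exact (Complex.mk_eq_add_mul_I _ _)
  have hFd : ∀ s, HasDerivAt F (F' s) s := by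
    intro s
    rw [hFe, hFe']
    exact (hd s 0).ofReal_comp.add ((hd s 1).ofReal_comp.mul_const _)
  have hFc : Continuous F := by rw [hFe]; fun_prop
  have hFc' : Continuous F' := by rw [hFe']; fun_prop
  have hn : ∀ s, Complex.normSq (F s) = 1 + α s 2 * α s 2 := by
    intro s
    rw [Complex.normSq_apply]
    have := hS' s
    simp only [F]; linarith
  have hF0 : ∀ s, F s ≠ 0 := by
    intro s h
    have := hn s
    rw [h] at this
    simp at this
    nlinarith [mul_self_nonneg (α s 2)]
  have hqc : Continuous (fun s => F' s / F s) := hFc'.div hFc hF0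
  let w : ℝ → ℂ := fun s => ∫ x in (0:ℝ)..s, F' x / F x
  have hw : ∀ s, HasDerivAt w (F' s / F s) s := fun s =>
    intervalIntegral.integral_hasDerivAt_right (hqc.intervalIntegrable _ _)
      hqc.stronglyMeasurable.stronglyMeasurableAtFilter hqc.continuousAt
  have hexp : ∀ s t, F s * Complex.exp (-w s) = F t * Complex.exp (-w t) := by
    have hder : ∀ s, HasDerivAt (fun s => F s * Complex.exp (-w s)) 0 s := by
      intro s
      have := (hFd s).mul ((hw s).neg.cexp)
      refine HasDerivAt.congr_deriv this ?_
      have h1 : F s * (F' s / F s) = F' s := mul_div_cancel₀ _ (hF0 s)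
      change F' s * Complex.exp (-w s) + F s * (Complex.exp (-w s) * -(F' s / F s)) = 0
      linear_combination -Complex.exp (-w s) * h1
    exact is_const_of_deriv_eq_zero (fun s => (hder s).differentiableAt) (fun s => (hder s).deriv)
  have hFw : ∀ s t, F s = F t * Complex.exp (w s - w t) := by
    intro s t
    have := hexp s t
    rw [Complex.exp_neg, Complex.exp_neg] at this
    rw [Complex.exp_sub]
    have h1 := Complex.exp_ne_zero (w s)
    have h2 := Complex.exp_ne_zero (w t)
    field_simp at this ⊢
    exact this
  let θ : ℝ → ℝ := fun s => (w s).im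
  have hθd : ∀ s, HasDerivAt θ (F' s / F s).im s := fun s =>
    (Complex.imCLM.hasFDerivAt.comp_hasDerivAt s (hw s))
  have hθc : Continuous θ := continuous_iff_continuousAt.2 fun s => (hθd s).continuousAt
  have hz : Continuous (fun s => α s 2) := by fun_prop
  have hne : ∀ s, (F' s / F s).im ≠ 0 := by
    intro s h
    have hns : 0 < Complex.normSq (F s) := Complex.normSq_pos.2 (hF0 s)
    rw [Complex.div_im, ← sub_div, div_eq_zero_iff] at h
    have h := h.resolve_right hns.ne'
    simp only [F, F'] at h
    have h3 : α s 0 * deriv α s 0 + α s 1 * deriv α s 1 - α s 2 * deriv α s 2 = 0 := by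
      have h4 := (((hd s 0).mul (hd s 0)).add ((hd s 1).mul (hd s 1))).sub ((hd s 2).mul (hd s 2))
      have h5 : HasDerivAt (fun s => α s 0 * α s 0 + α s 1 * α s 1 - α s 2 * α s 2) 0 s := by
        simp_rw [hS']
        exact hasDerivAt_const s 1
      have := h5.unique h4
      linarith
    have h6 := hsp s
    have h7 := hS' s
    unfold lorentz at h6
    generalize deriv α s 0 = p at *
    generalize deriv α s 1 = q at *
    generalize deriv α s 2 = r at *
    generalize α s 0 = x at *
    generalize α s 1 = y at *
    generalize α s 2 = v at *
    have key : (x * p + y * q)^2 + (q * x - p * y)^2 = (x*x+y*y) * (p*p+q*q) := by ring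
    have e1 : x * p + y * q = v * r := by linarith
    have e2 : x*x+y*y = 1 + v*v := by linarith
    rw [h, e1, e2] at key
    nlinarith [mul_nonneg (mul_self_nonneg v) h6.le, mul_self_nonneg r]
  have hθinj : Function.Injective θ := by
    have : ∀ a b, a < b → θ a ≠ θ b := by
      intro a b hab h
      obtain ⟨x, -, hx⟩ := exists_hasDerivAt_eq_zero hab hθc.continuousOn h (fun x _ => hθd x)
      exact hne x hx
    intro a b h
    rcases lt_trichotomy a b with h1 | h1 | h1
    · exact (this _ _ h1 h).elim
    · exact h1
    · exact (this _ _ h1 h.symm).elim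
  have hFp : ∀ s, F (s + T) = F s := by intro s; simp only [F]; rw [hper]
  have hFp' : ∀ s, F' (s + T) = F' s := by intro s; simp only [F']; rw [hpd]
  have hshift : ∀ s, θ (s + T) = θ s + (θ (0 + T) - θ 0) := by
    have hder : ∀ s, HasDerivAt (fun s => θ (s + T) - θ s) 0 s := by
      intro s
      have := ((hθd (s + T)).comp_add_const s T).sub (hθd s)
      rw [hFp, hFp', sub_self] at this
      exact this
    intro s
    have := is_const_of_deriv_eq_zero (fun s => (hder s).differentiableAt)
      (fun s => (hder s).deriv) s 0
    linarith
  have hzp : Function.Periodic (fun s => α s 2) T := fun s => by simp only; rw [hper]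
  have hI : ∀ (s t : ℝ) (n : ℤ), θ s = θ t + n * (2 * Real.pi) → α s 2 = α t 2 →
      ∃ m : ℤ, s = t + m * T := by
    intro s t n h hzz
    have h1 : Complex.exp (w s - w t) = (Real.exp ((w s).re - (w t).re) : ℝ) := by
      have : w s - w t = (((w s).re - (w t).re : ℝ) : ℂ) + n * (2 * Real.pi * Complex.I) := by
        apply Complex.ext
        · simp
        · have : (w s).im = (w t).im + n * (2 * Real.pi) := h
          simp [this]
      rw [this, Complex.exp_add, Complex.exp_int_mul_two_pi_mul_I]
      simp
    have h2 := hFw s t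
    rw [h1] at h2
    have h3 := congrArg Complex.normSq h2
    rw [Complex.normSq_mul, hn, hn, hzz, Complex.normSq_ofReal] at h3
    have hpos := Real.exp_pos ((w s).re - (w t).re)
    generalize Real.exp ((w s).re - (w t).re) = E at *
    have hE : E * E = 1 := by
      have h9 : 1 + α t 2 * α t 2 ≠ 0 := by nlinarith [mul_self_nonneg (α t 2)]
      apply mul_left_cancel₀ h9
      linarith
    have hE1 : E = 1 := by nlinarith
    rw [hE1] at h2
    simp only [Complex.ofReal_one, mul_one] at h2
    have hst : α s = α t := by
      funext i
      fin_cases i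
      · exact congrArg Complex.re h2
      · exact congrArg Complex.im h2
      · exact hzz
    have h8 := hinj s t hst
    rw [← sub_eq_zero, ← AddCircle.coe_sub, AddCircle.coe_eq_zero_iff] at h8
    obtain ⟨m, hm⟩ := h8
    rw [zsmul_eq_mul] at hm
    exact ⟨m, by linarith⟩
  have hmain : ∀ (s t : ℝ) (n : ℤ), θ s = θ t + n * (2 * Real.pi) → ∃ m : ℤ, s = t + m * T := by
    rcases hθc.strictMono_of_inj hθinj with hm | hm
    · exact core_aux T hT _ θ _ hθc hz hm hshift hzp hI
    · intro s t n h
      refine core_aux T hT (-(θ (0 + T) - θ 0)) (fun s => -θ s) _ hθc.neg hz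
        (fun a b hab => neg_lt_neg (hm hab)) (fun s => by rw [hshift s]; ring) hzp ?_ s t (-n) ?_
      · intro s t n h
        refine hI s t (-n) ?_
        push_cast
        linarith
      · push_cast
        linarith
  rintro _ ⟨s, rfl⟩ _ ⟨t, rfl⟩ h
  have h0 : α s 0 = α t 0 := congrFun h 0
  have h1 : α s 1 = α t 1 := congrFun h 1
  have hFF : F s = F t := Complex.ext h0 h1
  have h2 := hFw s t
  rw [hFF] at h2
  have h3 : Complex.exp (w s - w t) = 1 := by
    apply mul_left_cancel₀ (hF0 t)
    rw [← h2, mul_one]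
  obtain ⟨n, hn⟩ := Complex.exp_eq_one_iff.1 h3
  have h4 := congrArg Complex.im hn
  simp at h4
  obtain ⟨m, hm⟩ := hmain s t n (by simp only [θ]; linarith)
  rw [hm]
  exact (hper.int_mul m) t
end

section
/- Let φ be a complex-valued function holomorphic on the open unit disc 𝔻 = {z ∈ ℂ : |z| < 1} and continuous on the closed unit disc, and suppose that Im(z²·φ(z)) = 0 for every z with |z| = 1. Then φ ≡ 0 on 𝔻. (Consequently the Hopf differential of a stationary surface vanishes identically, so the surface is totally umbilical.) -/
/-!
If φ is holomorphic on the open unit disc, continuous on the closed unit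
disc, and Im(z²·φ(z)) = 0 on the unit circle, then φ ≡ 0 on the disc.
(Analytic core of the proof that stationary surfaces are totally umbilical.)
-/

theorem stmt_10 (φ : ℂ → ℂ)
    (hd : DifferentiableOn ℂ φ (Metric.ball (0 : ℂ) 1))
    (hc : ContinuousOn φ (Metric.closedBall (0 : ℂ) 1))
    (hb : ∀ z : ℂ, ‖z‖ = 1 → (z ^ 2 * φ z).im = 0) :
    ∀ z ∈ Metric.ball (0 : ℂ) 1, φ z = 0 := by
  have h0 : (0 : ℂ) ∈ Metric.ball (0 : ℂ) 1 := by simp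
  have hφ : DiffContOnCl ℂ φ (Metric.ball (0 : ℂ) 1) :=
    ⟨hd, by rwa [closure_ball (0 : ℂ) one_ne_zero]⟩
  have key : ∀ t : ℝ, ∀ z ∈ Metric.ball (0 : ℂ) 1,
      Complex.exp (Complex.I * t * (z ^ 2 * φ z)) = 1 := by
    intro t
    have hg : DiffContOnCl ℂ (fun z => Complex.exp (Complex.I * t * (z ^ 2 * φ z)))
        (Metric.ball (0 : ℂ) 1) := by
      refine ⟨?_, ?_⟩
      · have := hφ.1
        fun_prop
      · have := hφ.2
        fun_prop
    have hle : ∀ z ∈ Metric.ball (0 : ℂ) 1,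
        ‖Complex.exp (Complex.I * t * (z ^ 2 * φ z))‖ ≤ 1 := by
      intro z hz
      refine Complex.norm_le_of_forall_mem_frontier_norm_le Metric.isBounded_ball hg
        (fun w hw => ?_) (subset_closure hz)
      rw [frontier_ball (0 : ℂ) one_ne_zero, mem_sphere_zero_iff_norm] at hw
      have h1 := hb w hw
      have h2 : (Complex.I * t * (w ^ 2 * φ w)).re = - t * (w ^ 2 * φ w).im := by
        generalize w ^ 2 * φ w = u
        simp
      rw [Complex.norm_exp, h2, h1]
      simp
    have hmax := Complex.eqOn_of_isPreconnected_of_isMaxOn_norm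
      (convex_ball (0 : ℂ) 1).isPreconnected Metric.isOpen_ball hg.1 h0
      (fun z hz => by simpa using hle z hz)
    intro z hz
    simpa using hmax hz
  have hf : ∀ z ∈ Metric.ball (0 : ℂ) 1, z ^ 2 * φ z = 0 := by
    intro z hz
    have k := fun t => key t z hz
    generalize z ^ 2 * φ z = u at k
    have him : u.im = 0 := by
      have := congrArg norm (k 1)
      rw [Complex.norm_exp] at this
      simpa using this
    have hu : u = (u.re : ℂ) := by
      apply Complex.ext <;> simp [him]
    by_contra hne
    have hre : (u.re : ℂ) ≠ 0 := hu ▸ hne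
    have h3 := k (Real.pi / u.re)
    rw [hu] at h3
    have h4 : Complex.I * ((Real.pi / u.re : ℝ) : ℂ) * (u.re : ℂ) = Real.pi * Complex.I := by
      push_cast
      field_simp
    simp only [Complex.ofReal_re] at h3
    rw [h4, Complex.exp_pi_mul_I] at h3
    norm_num at h3
  have hne : ∀ z ∈ Metric.ball (0 : ℂ) 1, z ≠ 0 → φ z = 0 := by
    intro z hz hz0
    simpa [hz0] using hf z hz
  intro z hz
  by_cases hz0 : z = 0
  · subst hz0
    have hcont : ContinuousAt φ 0 := hd.continuousOn.continuousAt (Metric.ball_mem_nhds 0 one_pos)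
    have t1 : Filter.Tendsto φ (nhdsWithin 0 {0}ᶜ) (nhds (φ 0)) :=
      hcont.tendsto.mono_left nhdsWithin_le_nhds
    refine tendsto_nhds_unique t1 (tendsto_const_nhds.congr' ?_)
    filter_upwards [self_mem_nhdsWithin,
      nhdsWithin_le_nhds (Metric.ball_mem_nhds (0 : ℂ) one_pos)] with w hw hw1
    exact (hne w hw1 hw).symm
  · exact hne z hz hz0
end

section
/- Maximal graph with zero boundary values is trivial: let n ≥ 2, let Ω ⊂ ℝⁿ be a bounded open connected set, and let u be a real-valued function that is C² on an open neighborhood of the closure of Ω, with |∇u(x)| < 1 for all x in the closure of Ω (so the graph of u is a spacelike hypersurface in 𝕃ⁿ⁺¹). Suppose u satisfies the maximal hypersurface equation div(∇u/√(1 − |∇u|²)) = 0 on Ω and u = 0 on the boundary ∂Ω. Then u ≡ 0 on Ω. (This is the graph formulation of the statement: a compact spacelike hypersurface in 𝕃ⁿ⁺¹ with zero mean curvature and boundary in a spacelike hyperplane P lies in P.) -/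
/-!
Maximal graph with zero boundary values is trivial: if u is C² near the
closure of a bounded open connected Ω ⊂ ℝⁿ (n ≥ 2), |∇u| < 1 on the closure
(spacelike graph), u solves div(∇u/√(1−|∇u|²)) = 0 on Ω (zero mean curvature)
and u = 0 on ∂Ω, then u ≡ 0 on Ω.
-/

/-- The vector field ∇u/√(1 − |∇u|²) whose divergence is n times the mean
curvature of the spacelike graph of u in Lorentz–Minkowski space. -/
noncomputable def mcField {n : ℕ} (u : EuclideanSpace ℝ (Fin n) → ℝ)
    (x : EuclideanSpace ℝ (Fin n)) : EuclideanSpace ℝ (Fin n) :=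
  (1 / Real.sqrt (1 - ‖gradient u x‖ ^ 2)) • gradient u x

/-- The divergence of a vector field on ℝⁿ: the sum of the i-th partial
derivatives of the i-th components. -/
noncomputable def diverg {n : ℕ}
    (F : EuclideanSpace ℝ (Fin n) → EuclideanSpace ℝ (Fin n))
    (x : EuclideanSpace ℝ (Fin n)) : ℝ :=
  ∑ i : Fin n, fderiv ℝ F x (EuclideanSpace.single i 1) i

open scoped InnerProductSpace in
theorem aux_second {n : ℕ} (u : EuclideanSpace ℝ (Fin n) → ℝ) (y e : EuclideanSpace ℝ (Fin n))
    (A : EuclideanSpace ℝ (Fin n) →L[ℝ] EuclideanSpace ℝ (Fin n)) (ε : ℝ)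
    (hd : ∀ᶠ z in nhds y, DifferentiableAt ℝ u z)
    (hA : HasFDerivAt (gradient u) A y)
    (hm : IsLocalMax (fun z => u z + ε * ‖z‖ ^ 2) y) :
    ⟪A e, e⟫_ℝ ≤ - (2 * ε * ‖e‖ ^ 2) := by
  by_contra hlt
  push Not at hlt
  set l : ℝ → EuclideanSpace ℝ (Fin n) := fun t => y + t • e with hl
  have hl0 : l 0 = y := by simp [hl]
  have hld : ∀ t, HasDerivAt l e t := by
    intro t
    have := ((hasDerivAt_id t).smul_const e).const_add y
    simpa [hl] using this
  have hlc : Filter.Tendsto l (nhds 0) (nhds y) := by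
    have := (hld 0).continuousAt.tendsto
    rwa [hl0] at this
  set h : ℝ → ℝ := fun t => u (l t) + ε * ‖l t‖ ^ 2 with hh
  have h1 : ∀ᶠ t in nhds (0:ℝ),
      HasDerivAt h (⟪gradient u (l t), e⟫_ℝ + ε * (2 * ⟪l t, e⟫_ℝ)) t := by
    filter_upwards [hlc.eventually hd] with t ht
    have a1 := ht.hasGradientAt.hasFDerivAt.comp_hasDerivAt t (hld t)
    have a2 := ((hld t).norm_sq).const_mul ε
    have := a1.add a2
    refine HasDerivAt.congr_deriv (f := _) this ?_
    simp
  have h2 : deriv h =ᶠ[nhds 0] fun t => ⟪gradient u (l t), e⟫_ℝ + ε * (2 * ⟪l t, e⟫_ℝ) := by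
    filter_upwards [h1] with t ht using ht.deriv
  have h3 : HasDerivAt (fun t => ⟪gradient u (l t), e⟫_ℝ + ε * (2 * ⟪l t, e⟫_ℝ))
      (⟪A e, e⟫_ℝ + ε * (2 * ⟪e, e⟫_ℝ)) 0 := by
    have hA' : HasFDerivAt (gradient u) A (l 0) := by rwa [hl0]
    have a1 := (hA'.comp_hasDerivAt (0:ℝ) (hld 0)).inner ℝ (hasDerivAt_const (0:ℝ) e)
    have a2 := (((hld 0).inner ℝ (hasDerivAt_const (0:ℝ) e)).const_mul 2).const_mul ε
    have := a1.add a2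
    refine HasDerivAt.congr_deriv (f := _) this ?_
    simp
  have h4 : deriv (deriv h) 0 = ⟪A e, e⟫_ℝ + ε * (2 * ⟪e, e⟫_ℝ) := by
    rw [h2.deriv_eq, h3.deriv]
  have hpos : 0 < deriv (deriv h) 0 := by
    rw [h4, real_inner_self_eq_norm_sq]; linarith
  have hmax : IsLocalMax h 0 := by
    have := hlc.eventually hm
    filter_upwards [this] with t ht
    simpa [hh, hl0] using ht
  have hmin : IsLocalMin h 0 :=
    isLocalMin_of_deriv_deriv_pos hpos hmax.deriv_eq_zero h1.self_of_nhds.continuousAt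
  have hconst : h =ᶠ[nhds 0] fun _ => h 0 := by
    filter_upwards [hmax, hmin] with t a b using le_antisymm a b
  have : deriv (deriv h) 0 = 0 := by
    rw [hconst.deriv.deriv_eq]; simp
  linarith

open scoped InnerProductSpace in
theorem aux_diverg {n : ℕ} (u : EuclideanSpace ℝ (Fin n) → ℝ) (y : EuclideanSpace ℝ (Fin n))
    (A : EuclideanSpace ℝ (Fin n) →L[ℝ] EuclideanSpace ℝ (Fin n))
    (hA : HasFDerivAt (gradient u) A y) (hs : ‖gradient u y‖ < 1) :
    ∃ a b : ℝ, 0 < a ∧ 0 ≤ b ∧ diverg (mcField u) y =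
      a * (∑ i : Fin n, ⟪A (EuclideanSpace.single i 1), EuclideanSpace.single i 1⟫_ℝ)
        + b * ⟪A (gradient u y), gradient u y⟫_ℝ := by
  set g := gradient u y with hg
  have hs' : 0 < 1 - ‖g‖ ^ 2 := by nlinarith [norm_nonneg g]
  have hsq : 0 < Real.sqrt (1 - ‖g‖ ^ 2) := Real.sqrt_pos.2 hs'
  have hφ : HasDerivAt (fun s : ℝ => 1 / Real.sqrt (1 - s))
      (1 / (2 * Real.sqrt (1 - ‖g‖ ^ 2) * (Real.sqrt (1 - ‖g‖ ^ 2)) ^ 2)) (‖g‖ ^ 2) := by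
    have a1 := (((hasDerivAt_id (‖g‖ ^ 2)).const_sub 1).sqrt hs'.ne').inv hsq.ne'
    simp only [one_div]
    refine HasDerivAt.congr_deriv (f := _) a1 ?_
    simp only [id]
    field_simp
  set c := 1 / (2 * Real.sqrt (1 - ‖g‖ ^ 2) * (Real.sqrt (1 - ‖g‖ ^ 2)) ^ 2) with hc
  have hF := (hφ.comp_hasFDerivAt y hA.norm_sq).smul hA
  have hF' : fderiv ℝ (mcField u) y = _ := hF.fderiv
  refine ⟨1 / Real.sqrt (1 - ‖g‖ ^ 2), c * 2, by positivity, by positivity, ?_⟩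
  have hsum : A g = ∑ i : Fin n, g i • A (EuclideanSpace.single i 1) := by
    have : g = ∑ i : Fin n, g i • EuclideanSpace.single i (1:ℝ) := by
      ext j; simp [Finset.sum_apply, Pi.single_apply]
    conv_lhs => rw [this]
    simp
  unfold diverg
  rw [hF', hsum, sum_inner, Finset.mul_sum, Finset.mul_sum, ← Finset.sum_add_distrib]
  refine Finset.sum_congr rfl fun i _ => ?_
  simp [EuclideanSpace.inner_single_right, inner_smul_left, ← hg, real_inner_comm]
  ring

theorem aux_le {n : ℕ} (hn : 2 ≤ n) (Ω : Set (EuclideanSpace ℝ (Fin n)))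
    (hΩo : IsOpen Ω) (hΩb : Bornology.IsBounded Ω)
    (u : EuclideanSpace ℝ (Fin n) → ℝ)
    (U : Set (EuclideanSpace ℝ (Fin n))) (hUo : IsOpen U) (hUcl : closure Ω ⊆ U)
    (hu : ContDiffOn ℝ 2 u U)
    (hsp : ∀ x ∈ closure Ω, ‖gradient u x‖ < 1)
    (hmax : ∀ x ∈ Ω, diverg (mcField u) x = 0)
    (hbd : ∀ x ∈ frontier Ω, u x = 0) :
    ∀ x ∈ Ω, u x ≤ 0 := by
  intro x hx
  by_contra hpos
  push Not at hpos
  have hK : IsCompact (closure Ω) := hΩb.isCompact_closure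
  obtain ⟨R, hR0, hR⟩ := hK.isBounded.exists_pos_norm_le
  set ε := u x / (2 * R ^ 2) with hε
  have hεpos : 0 < ε := by positivity
  have hεR : ε * R ^ 2 < u x := by
    have : ε * R ^ 2 = u x / 2 := by rw [hε]; field_simp
    linarith
  have hcont : ContinuousOn (fun z => u z + ε * ‖z‖ ^ 2) (closure Ω) :=
    (hu.continuousOn.mono hUcl).add (by fun_prop)
  obtain ⟨y, hy, hym⟩ := hK.exists_isMaxOn ⟨x, subset_closure hx⟩ hcont
  have hyx : u x + ε * ‖x‖ ^ 2 ≤ u y + ε * ‖y‖ ^ 2 := hym (subset_closure hx)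
  have hyΩ : y ∈ Ω := by
    by_contra hno
    have hf : y ∈ frontier Ω := by rw [hΩo.frontier_eq]; exact ⟨hy, hno⟩
    rw [hbd y hf] at hyx
    have h1 : ‖y‖ ^ 2 ≤ R ^ 2 := pow_le_pow_left₀ (norm_nonneg _) (hR y hy) 2
    have h2 : ε * ‖y‖ ^ 2 ≤ ε * R ^ 2 := by gcongr
    have : 0 ≤ ε * ‖x‖ ^ 2 := by positivity
    linarith
  have hloc : IsLocalMax (fun z => u z + ε * ‖z‖ ^ 2) y :=
    hym.isLocalMax (Filter.mem_of_superset (hΩo.mem_nhds hyΩ) subset_closure)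
  have hUy : U ∈ nhds y := hUo.mem_nhds (hUcl hy)
  have hd : ∀ᶠ z in nhds y, DifferentiableAt ℝ u z := by
    filter_upwards [hUy] with z hz
    exact (hu.contDiffAt (hUo.mem_nhds hz)).differentiableAt (by norm_num)
  have hfd : DifferentiableAt ℝ (fderiv ℝ u) y :=
    ((hu.contDiffAt hUy).fderiv_right (m := 1) (by norm_num)).differentiableAt (by norm_num)
  have hgd : DifferentiableAt ℝ (gradient u) y :=
    (InnerProductSpace.toDual ℝ
      (EuclideanSpace ℝ (Fin n))).symm.toContinuousLinearEquiv.differentiableAt.comp y hfd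
  obtain ⟨a, b, ha, hb, hab⟩ := aux_diverg u y _ hgd.hasFDerivAt (hsp y hy)
  rw [hmax y hyΩ] at hab
  have hs := fun e => aux_second u y e _ ε hd hgd.hasFDerivAt hloc
  have hneg := hs (gradient u y)
  have hneg' : inner ℝ (fderiv ℝ (gradient u) y (gradient u y)) (gradient u y) ≤ 0 :=
    hneg.trans (by simp only [Left.neg_nonpos_iff]; positivity)
  have hne : (Finset.univ : Finset (Fin n)).Nonempty := ⟨⟨0, by omega⟩, Finset.mem_univ _⟩
  have hsum : (∑ i : Fin n, inner ℝ (fderiv ℝ (gradient u) y (EuclideanSpace.single i 1))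
      (EuclideanSpace.single i (1:ℝ))) < 0 := by
    refine Finset.sum_neg (fun i _ => ?_) hne
    have := hs (EuclideanSpace.single i 1)
    rw [EuclideanSpace.norm_single, norm_one] at this
    linarith
  have := mul_neg_of_pos_of_neg ha hsum
  have := mul_nonpos_of_nonneg_of_nonpos hb hneg'
  linarith

theorem stmt_11 (n : ℕ) (hn : 2 ≤ n) (Ω : Set (EuclideanSpace ℝ (Fin n)))
    (hΩo : IsOpen Ω) (hΩb : Bornology.IsBounded Ω) (hΩc : IsConnected Ω)
    (u : EuclideanSpace ℝ (Fin n) → ℝ)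
    (U : Set (EuclideanSpace ℝ (Fin n))) (hUo : IsOpen U) (hUcl : closure Ω ⊆ U)
    (hu : ContDiffOn ℝ 2 u U)
    (hsp : ∀ x ∈ closure Ω, ‖gradient u x‖ < 1)
    (hmax : ∀ x ∈ Ω, diverg (mcField u) x = 0)
    (hbd : ∀ x ∈ frontier Ω, u x = 0) :
    ∀ x ∈ Ω, u x = 0 := by
  intro x hx
  have hg : ∀ z, gradient (fun w => - u w) z = - gradient u z := by
    intro z
    simp [gradient, fderiv_fun_neg]
  have hF : mcField (fun w => - u w) = fun z => - mcField u z := by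
    funext z
    simp [mcField, hg]
  have h1 := aux_le hn Ω hΩo hΩb u U hUo hUcl hu hsp hmax hbd x hx
  have h2 := aux_le hn Ω hΩo hΩb (fun w => - u w) U hUo hUcl hu.neg
    (fun z hz => by rw [hg, norm_neg]; exact hsp z hz)
    (fun z hz => by
      have := hmax z hz
      unfold diverg at this ⊢
      rw [hF, fderiv_fun_neg]
      simpa using this)
    (fun z hz => by simp [hbd z hz]) x hx
  linarith
end

section
/- A spacelike graph with nonvanishing mean curvature and zero boundary values lies on one side of the hyperplane: let n ≥ 2, let Ω ⊂ ℝⁿ be a bounded open connected set, and let u be a real-valued function that is C² on an open neighborhood of the closure of Ω, with |∇u(x)| < 1 for all x in the closure of Ω, and with u = 0 on the boundary ∂Ω. If the mean curvature expression div(∇u/√(1 − |∇u|²)) is nonzero at every point of Ω, then u does not change sign: either u(x) ≥ 0 for all x ∈ Ω, or u(x) ≤ 0 for all x ∈ Ω. (This is the graph formulation of the statement: a compact spacelike hypersurface in 𝕃ⁿ⁺¹ with nowhere vanishing mean curvature and boundary in a spacelike hyperplane P lies in one side of P.) -/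
theorem mc_contDiffOn {n : ℕ} {Ω : Set (EuclideanSpace ℝ (Fin n))} (hΩo : IsOpen Ω)
    {u : EuclideanSpace ℝ (Fin n) → ℝ} (hu : ContDiffOn ℝ 2 u Ω)
    (hsp : ∀ x ∈ Ω, ‖gradient u x‖ < 1) : ContDiffOn ℝ 1 (mcField u) Ω := by
  have h1 : ContDiffOn ℝ 1 (fderiv ℝ u) Ω := hu.fderiv_of_isOpen hΩo (by norm_num)
  have h2 : ContDiffOn ℝ 1 (gradient u) Ω := by
    unfold gradient
    exact ((InnerProductSpace.toDual ℝ (EuclideanSpace ℝ (Fin n))).symm.contDiff).comp_contDiffOn h1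
  have hpos : ∀ x ∈ Ω, 0 < 1 - ‖gradient u x‖ ^ 2 := by
    intro x hx
    nlinarith [hsp x hx, norm_nonneg (gradient u x)]
  have h3 : ContDiffOn ℝ 1 (fun x => Real.sqrt (1 - ‖gradient u x‖ ^ 2)) Ω :=
    (contDiffOn_const.sub (h2.norm_sq ℝ)).sqrt (fun x hx => (hpos x hx).ne')
  unfold mcField
  exact (contDiffOn_const.div h3 (fun x hx => (Real.sqrt_pos.2 (hpos x hx)).ne')).smul h2

theorem mc_localMax {n : ℕ} {p : EuclideanSpace ℝ (Fin n)}
    {u : EuclideanSpace ℝ (Fin n) → ℝ} (hu : ∀ᶠ x in nhds p, DifferentiableAt ℝ u x)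
    (hF : DifferentiableAt ℝ (mcField u) p) (hmax : IsLocalMax u p) :
    diverg (mcField u) p ≤ 0 := by
  unfold diverg
  refine Finset.sum_nonpos fun i _ => ?_
  by_contra! hlt
  set e : EuclideanSpace ℝ (Fin n) := EuclideanSpace.single i 1 with he
  have hline : ∀ t : ℝ, HasDerivAt (fun t : ℝ => p + t • e) e t := by
    intro t
    simpa using ((hasDerivAt_id t).smul_const e).const_add p
  have hcont : Filter.Tendsto (fun t : ℝ => p + t • e) (nhds 0) (nhds p) := by
    have := (hline 0).continuousAt.tendsto
    simpa using this
  have hφ : ∀ᶠ t : ℝ in nhds 0, HasDerivAt (fun t : ℝ => u (p + t • e))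
      (gradient u (p + t • e) i) t := by
    filter_upwards [hcont.eventually hu] with t ht
    have h := ht.hasGradientAt.hasFDerivAt.comp_hasDerivAt t (hline t)
    have h' : inner ℝ (gradient u (p + t • e)) e = gradient u (p + t • e) i := by
      rw [he, EuclideanSpace.inner_single_right]
      simp only [one_mul, conj_trivial]
    rw [InnerProductSpace.toDual_apply_apply, h'] at h
    exact h
  have hg0 : gradient u p = 0 := by
    unfold gradient
    rw [hmax.fderiv_eq_zero]; simp
  have hF0 : mcField u p i = 0 := by simp [mcField, hg0]
  have hGd : HasDerivAt (fun t : ℝ => mcField u (p + t • e) i)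
      (fderiv ℝ (mcField u) p e i) 0 := by
    have h0 : HasFDerivAt (mcField u) (fderiv ℝ (mcField u) p) (p + (0 : ℝ) • e) := by
      simpa using hF.hasFDerivAt
    have h := h0.comp_hasDerivAt (0 : ℝ) (hline 0)
    exact ((EuclideanSpace.proj (𝕜 := ℝ) i).hasFDerivAt.comp_hasDerivAt (0 : ℝ) h)
  have hpos : ∀ᶠ t : ℝ in nhdsWithin 0 (Set.Ioi 0), 0 < gradient u (p + t • e) i := by
    have hs := (hasDerivAt_iff_tendsto_slope.1 hGd).eventually (lt_mem_nhds hlt)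
    have hs' := nhdsWithin_mono (0 : ℝ) (fun t (ht : t ∈ Set.Ioi (0 : ℝ)) => ne_of_gt ht) hs
    filter_upwards [hs', self_mem_nhdsWithin] with t ht ht0
    have ht0' : (0 : ℝ) < t := ht0
    simp only [slope_def_field, zero_smul, add_zero, hF0, sub_zero] at ht
    have h1 : 0 < mcField u (p + t • e) i := by
      rcases div_pos_iff.1 ht with h | h
      · exact h.1
      · linarith [h.2]
    simp only [mcField, PiLp.smul_apply, smul_eq_mul] at h1
    exact pos_of_mul_pos_right h1 (by positivity)
  have hm : ∀ᶠ t : ℝ in nhds 0, u (p + t • e) ≤ u p := hcont.eventually hmax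
  obtain ⟨δ, hδ, hball⟩ := Metric.eventually_nhds_iff.1 (hφ.and hm)
  obtain ⟨c, hc, hIoo⟩ := mem_nhdsGT_iff_exists_Ioo_subset.1 hpos
  have hc0 : (0 : ℝ) < c := hc
  set b := min (δ / 2) (c / 2) with hb
  have hb0 : 0 < b := by positivity
  have hbδ : b < δ := by have := min_le_left (δ / 2) (c / 2); linarith
  have hbc : b < c := by have := min_le_right (δ / 2) (c / 2); linarith
  have hd : ∀ t ∈ Set.Icc 0 b, dist t 0 < δ := by
    intro t ht
    rw [Real.dist_eq, sub_zero, abs_of_nonneg ht.1]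
    linarith [ht.2]
  obtain ⟨t, ht, hte⟩ := exists_hasDerivAt_eq_slope (fun t : ℝ => u (p + t • e))
    (fun t => gradient u (p + t • e) i) hb0
    (fun t ht => (hball (hd t ht)).1.continuousAt.continuousWithinAt)
    (fun t ht => (hball (hd t ⟨ht.1.le, ht.2.le⟩)).1)
  have h1 : 0 < gradient u (p + t • e) i := hIoo ⟨ht.1, ht.2.trans hbc⟩
  have h2 := (hball (hd b ⟨hb0.le, le_rfl⟩)).2
  rw [hte] at h1
  simp only [zero_smul, add_zero, sub_zero] at h1
  have h3 : (u (p + b • e) - u p) / b ≤ 0 :=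
    div_nonpos_of_nonpos_of_nonneg (by linarith) hb0.le
  linarith

theorem mcField_neg' {n : ℕ} (u : EuclideanSpace ℝ (Fin n) → ℝ) :
    mcField (-u) = -mcField u := by
  have h : ∀ x, gradient (-u) x = -gradient u x := by
    intro x
    simp [gradient, fderiv_neg]
  funext x
  simp [mcField, h]

theorem diverg_neg' {n : ℕ} (F : EuclideanSpace ℝ (Fin n) → EuclideanSpace ℝ (Fin n))
    (x : EuclideanSpace ℝ (Fin n)) : diverg (-F) x = -diverg F x := by
  simp [diverg, fderiv_neg]

theorem stmt_12 (n : ℕ) (hn : 2 ≤ n) (Ω : Set (EuclideanSpace ℝ (Fin n)))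
    (hΩo : IsOpen Ω) (hΩb : Bornology.IsBounded Ω) (hΩc : IsConnected Ω)
    (u : EuclideanSpace ℝ (Fin n) → ℝ)
    (U : Set (EuclideanSpace ℝ (Fin n))) (hUo : IsOpen U) (hUcl : closure Ω ⊆ U)
    (hu : ContDiffOn ℝ 2 u U)
    (hsp : ∀ x ∈ closure Ω, ‖gradient u x‖ < 1)
    (hbd : ∀ x ∈ frontier Ω, u x = 0)
    (hH : ∀ x ∈ Ω, diverg (mcField u) x ≠ 0) :
    (∀ x ∈ Ω, 0 ≤ u x) ∨ (∀ x ∈ Ω, u x ≤ 0) := by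
  by_contra! hcon
  obtain ⟨⟨a, ha, hua⟩, ⟨b, hb, hub⟩⟩ := hcon
  have hΩU : Ω ⊆ U := subset_closure.trans hUcl
  have hF := mc_contDiffOn hΩo (hu.mono hΩU) (fun x hx => hsp x (subset_closure hx))
  have hFd : ∀ x ∈ Ω, DifferentiableAt ℝ (mcField u) x := fun x hx =>
    (hF.differentiableOn (by norm_num)).differentiableAt (hΩo.mem_nhds hx)
  have hud : ∀ x ∈ Ω, ∀ᶠ y in nhds x, DifferentiableAt ℝ u y := by
    intro x hx
    filter_upwards [hΩo.mem_nhds hx] with y hy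
    exact (hu.differentiableOn (by norm_num)).differentiableAt (hUo.mem_nhds (hΩU hy))
  have hK : IsCompact (closure Ω) := hΩb.isCompact_closure
  have hmem : ∀ x ∈ closure Ω, u x ≠ 0 → x ∈ Ω := by
    intro x hx hne
    by_contra hx'
    exact hne (hbd x ⟨hx, by rwa [hΩo.interior_eq]⟩)
  have huc : ContinuousOn u (closure Ω) := hu.continuousOn.mono hUcl
  obtain ⟨p, hp, hpm⟩ := hK.exists_isMaxOn ⟨a, subset_closure ha⟩ huc
  obtain ⟨q, hq, hqm⟩ := hK.exists_isMinOn ⟨a, subset_closure ha⟩ huc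
  have hpΩ : p ∈ Ω := hmem p hp (by
    have : u b ≤ u p := hpm (subset_closure hb)
    linarith)
  have hqΩ : q ∈ Ω := hmem q hq (by
    have : u q ≤ u a := hqm (subset_closure ha)
    linarith)
  have hcl : ∀ x ∈ Ω, closure Ω ∈ nhds x := fun x hx =>
    Filter.mem_of_superset (hΩo.mem_nhds hx) subset_closure
  have h1 : diverg (mcField u) p ≤ 0 :=
    mc_localMax (hud p hpΩ) (hFd p hpΩ) (hpm.isLocalMax (hcl p hpΩ))
  have h2 : 0 ≤ diverg (mcField u) q := by
    have h := mc_localMax (u := -u) (p := q)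
      ((hud q hqΩ).mono fun y hy => hy.neg)
      (by rw [mcField_neg']; exact (hFd q hqΩ).neg)
      (hqm.isLocalMin (hcl q hqΩ)).neg
    rw [mcField_neg', diverg_neg'] at h
    linarith
  have hfc : ContinuousOn (fderiv ℝ (mcField u)) Ω :=
    hF.continuousOn_fderiv_of_isOpen hΩo le_rfl
  have hc : ContinuousOn (diverg (mcField u)) Ω := by
    unfold diverg
    refine continuousOn_finsetSum _ fun i _ => ?_
    exact (EuclideanSpace.proj (𝕜 := ℝ) i).continuous.comp_continuousOn
      (hfc.clm_apply continuousOn_const)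
  obtain ⟨z, hz, hz0⟩ := hΩc.isPreconnected.intermediate_value hpΩ hqΩ hc ⟨h1, h2⟩
  exact hH z hz hz0
end
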